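/- arXiv:1005.0724 — 3 statements merged into one kernel-verified Lean document; each statement's English description precedes it below -/
import Mathlib

section
/- Let n >= 1 be an integer. Assume mu_1 and mu'_2 are unramified and mu_2 is trivial on 1 + p^n Z_p. Let h : G -> C be a function such that h(t*g) = chi_1(t) * chi'_2(t) * h(g) for all t in T and g in G, h(j) = 1 for all j in J_n, and h(g) = 0 whenever g is not of the form t*j with t in T and j in J_n. Let H : G × G -> C be a function such that H(b_1*g_1, b_2*g_2) = chi_1(b_1) * chi_2(b_2) * delta(b_1*b_2)^{1/2} * H(g_1,g_2) for all b_1, b_2 in B and g_1, g_2 in G, and such that H(g,g) = 0 and H(g, w*g) = h(g) for all g in G. Then for all k_1 = [[*,*],[c_1,d_1]] and k_2 = [[*,*],[c_2,d_2]] in K: H(k_1,k_2) = mu'_1(d_1) * mu_2(-det(k_2)/c_2) if k_1 lies in I_n and k_2 lies in K \ I, and H(k_1,k_2) = 0 otherwise. -/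
open Matrix

noncomputable section

variable (p : ℕ) [Fact p.Prime]

/-- The underlying matrix of an element of `GL₂(ℚ_p)`. -/
def mat (g : GL (Fin 2) ℚ_[p]) : Matrix (Fin 2) (Fin 2) ℚ_[p] := g

/-- Membership in `K = GL₂(ℤ_p)`: all entries are `p`-adic integers and the
determinant is a unit of `ℤ_p`. -/
def inK (g : GL (Fin 2) ℚ_[p]) : Prop :=
  (∀ i j, ‖mat p g i j‖ ≤ 1) ∧ ‖(mat p g).det‖ = 1

/-- Membership in the Iwahori subgroup `I_n` of `K`: for `n = 0`, `I_0 = K`;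
for `n ≥ 1`, the diagonal entries are units of `ℤ_p` and the lower left entry
lies in `p^n ℤ_p`. -/
def inI (n : ℕ) (g : GL (Fin 2) ℚ_[p]) : Prop :=
  inK p g ∧ (n = 0 ∨
    (‖mat p g 0 0‖ = 1 ∧ ‖mat p g 1 1‖ = 1 ∧ ‖mat p g 1 0‖ ≤ (p : ℝ) ^ (-(n : ℤ))))

/-- `p` as a unit of `ℚ_p`. -/
def pu : ℚ_[p]ˣ :=
  Units.mk0 (p : ℚ_[p]) (by exact_mod_cast (Fact.out : p.Prime).ne_zero)

/-- The element `γ = diag(p⁻¹, 1)` of `GL₂(ℚ_p)`. -/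
def gamma : GL (Fin 2) ℚ_[p] :=
  Matrix.GeneralLinearGroup.mkOfDetNeZero !![(p : ℚ_[p])⁻¹, 0; 0, 1] (by
    have hp : (p : ℚ_[p]) ≠ 0 := by exact_mod_cast (Fact.out : p.Prime).ne_zero
    simp [Matrix.det_fin_two_of, hp])

/-- A character of `ℚ_p^×` is unramified if it is trivial on `ℤ_p^×`. -/
def Unramified (μ : ℚ_[p]ˣ →* ℂˣ) : Prop :=
  ∀ u : ℚ_[p]ˣ, ‖(u : ℚ_[p])‖ = 1 → μ u = 1

/-- A character of `ℚ_p^×` is trivial on `1 + p^j ℤ_p`. -/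
def TrivialOnOnePlusP (j : ℕ) (μ : ℚ_[p]ˣ →* ℂˣ) : Prop :=
  ∀ u : ℚ_[p]ˣ, ‖(u : ℚ_[p]) - 1‖ ≤ (p : ℝ) ^ (-(j : ℤ)) → μ u = 1

/-- The Weyl element `w = [[0,1],[1,0]]` of `GL₂(ℚ_p)`. -/
def wEl : GL (Fin 2) ℚ_[p] :=
  Matrix.GeneralLinearGroup.mkOfDetNeZero !![(0 : ℚ_[p]), 1; 1, 0] (by
    simp [Matrix.det_fin_two_of])

/-- Membership in the diagonal torus `T` of `GL₂(ℚ_p)`. -/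
def inT (g : GL (Fin 2) ℚ_[p]) : Prop := mat p g 1 0 = 0 ∧ mat p g 0 1 = 0

/-- Membership in `J_n = [[1, ℤ_p], [p^n ℤ_p, 1]]`. -/
def inJ (n : ℕ) (g : GL (Fin 2) ℚ_[p]) : Prop :=
  mat p g 0 0 = 1 ∧ mat p g 1 1 = 1 ∧ ‖mat p g 0 1‖ ≤ 1 ∧
    ‖mat p g 1 0‖ ≤ (p : ℝ) ^ (-(n : ℤ))

/-!
A function `H` that is left equivariant under `B × B` is determined up to explicit factors by the
bottom rows of its two arguments, that is, by a pair of points of `ℙ¹`. There are two orbits of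
`GL₂` on such pairs. On the diagonal orbit `H` vanishes because `H g g = 0`; a pair in the open
orbit is represented by `(g, w g)`, where `g` has rows the bottom rows of `k₂` and `k₁`. For
`k₁, k₂ ∈ K` this `g` lies in `T J_n` exactly when `k₁ ∈ I_n` and `k₂ ∉ I`; scaling its rows to
have diagonal `1` gives `j ∈ J_n`, and `H k₁ k₂` is then the equivariance factor times
`H j (w j) = 1`. The factor simplifies since `det j ∈ 1 + p ^ n ℤ_p`. Nothing here is special to
`ℚ_p`: any ultrametric normed field, with a radius `r < 1` in place of `p ^ (-n)`, will do.
-/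

open scoped Pointwise

section Field

variable {F : Type*} [Field F]

/-- The Weyl element `[[0, 1], [1, 0]]` of `GL₂(F)`. -/
def weyl (F : Type*) [Field F] : GL (Fin 2) F :=
  GeneralLinearGroup.mkOfDetNeZero !![0, 1; 1, 0] (by simp [det_fin_two_of])

/-- The diagonal torus of `GL₂(F)`. -/
def diagonalTorus (F : Type*) [Field F] : Set (GL (Fin 2) F) :=
  {t | t 1 0 = 0 ∧ t 0 1 = 0}

/-- Left equivariance of `H` under `B × B`, where `B` is the upper triangular Borel subgroup of
`GL₂(F)`. The factor `ψ a₁ d₁ a₂ d₂` depends on the diagonals `(a₁, d₁)` and `(a₂, d₂)` only; it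
is not required to be multiplicative. -/
def IsBorelEquivariant {A : Type*} [Mul A] (ψ : Fˣ → Fˣ → Fˣ → Fˣ → A)
    (H : GL (Fin 2) F → GL (Fin 2) F → A) : Prop :=
  ∀ (b₁ b₂ g₁ g₂ : GL (Fin 2) F) (a₁ d₁ a₂ d₂ : Fˣ),
    b₁ 1 0 = 0 → b₁ 0 0 = a₁ → b₁ 1 1 = d₁ → b₂ 1 0 = 0 → b₂ 0 0 = a₂ → b₂ 1 1 = d₂ →
      H (b₁ * g₁) (b₂ * g₂) = ψ a₁ d₁ a₂ d₂ * H g₁ g₂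

/-- The factor `χ₁(b₁) χ₂(b₂) δ(b₁ b₂)` for `χᵢ(b) = μᵢ(a) μ'ᵢ(d)`, in terms of the diagonals
`(a₁, d₁)` and `(a₂, d₂)` of `b₁` and `b₂`. Here `δ` stands for the square root of the modulus
character, as a function of the ratio of the two diagonal entries. -/
def borelWeight {A : Type*} [Monoid A] (μ₁ μ'₁ μ₂ μ'₂ : Fˣ →* Aˣ) (δ : F → A)
    (a₁ d₁ a₂ d₂ : Fˣ) : A :=
  μ₁ a₁ * μ'₁ d₁ * μ₂ a₂ * μ'₂ d₂ * δ ((a₁ * a₂) / (d₁ * d₂))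

theorem weyl_mul_row_one (g : GL (Fin 2) F) : (weyl F * g) 1 = g 0 := by
  ext i
  simp [weyl, GeneralLinearGroup.mkOfDetNeZero, mul_apply, Fin.sum_univ_two]

theorem det_weyl_mul (g : GL (Fin 2) F) : (weyl F * g).det = -g.det := by
  ext
  simp [weyl, GeneralLinearGroup.mkOfDetNeZero, det_fin_two_of]

theorem row_one_ne_zero (g : GL (Fin 2) F) : g 1 ≠ 0 := fun h =>
  GeneralLinearGroup.det_ne_zero g (det_eq_zero_of_row_eq_zero 1 (congrFun h))

theorem mul_inv_row_one {k g : GL (Fin 2) F} {d : Fˣ} (hrow : k 1 = d • g 1) :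
    (k * g⁻¹) 1 = d • (1 : Matrix (Fin 2) (Fin 2) F) 1 := by
  calc
    (k * g⁻¹) 1 = d • (g * g⁻¹) 1 := by
        rw [GeneralLinearGroup.coe_mul, GeneralLinearGroup.coe_mul, mul_apply_eq_vecMul,
          mul_apply_eq_vecMul, hrow, smul_vecMul]
    _ = d • (1 : Matrix (Fin 2) (Fin 2) F) 1 := by
        rw [mul_inv_cancel, GeneralLinearGroup.coe_one]

theorem mul_inv_zero_zero {k g : GL (Fin 2) F} {d : Fˣ} (hrow : k 1 = d • g 1) :
    (k * g⁻¹) 0 0 = (k.det / (d * g.det) : Fˣ) := by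
  have hdet : (k * g⁻¹) 0 0 * d = (k.det / g.det : Fˣ) := by
    rw [div_eq_mul_inv, ← map_inv, ← map_mul, GeneralLinearGroup.val_det_apply, det_fin_two]
    simp [mul_inv_row_one hrow, Units.smul_def]
  rw [← div_div, div_right_comm, Units.val_div_eq_div_val, ← hdet,
    mul_div_cancel_right₀ _ d.ne_zero]

/- The two orbits of `GL₂` on pairs of points of the projective line. -/
theorem row_one_eq_smul_or_exists_rows (k₁ k₂ : GL (Fin 2) F) :
    (∃ d : Fˣ, k₂ 1 = d • k₁ 1) ∨ ∃ g : GL (Fin 2) F, g 0 = k₂ 1 ∧ g 1 = k₁ 1 := by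
  by_cases hli : LinearIndependent F ![k₁ 1, k₂ 1]
  · have hunit : IsUnit (of ![k₂ 1, k₁ 1]) :=
      linearIndependent_rows_iff_isUnit.1 (LinearIndependent.pair_symm_iff.1 hli)
    exact .inr ⟨hunit.unit, rfl, rfl⟩
  · rw [LinearIndependent.pair_iff' (row_one_ne_zero k₁)] at hli
    push Not at hli
    obtain ⟨a, ha⟩ := hli
    have ha₀ : a ≠ 0 := by
      rintro rfl
      exact row_one_ne_zero k₂ (by rw [← ha, zero_smul])
    exact .inl ⟨Units.mk0 a ha₀, ha.symm⟩

variable {A : Type*} {ψ : Fˣ → Fˣ → Fˣ → Fˣ → A} {H : GL (Fin 2) F → GL (Fin 2) F → A}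

theorem IsBorelEquivariant.apply_eq_of_row_eq_smul [Mul A]
    (hH : IsBorelEquivariant ψ H) {k₁ k₂ g₁ g₂ : GL (Fin 2) F} {d₁ d₂ : Fˣ}
    (h₁ : k₁ 1 = d₁ • g₁ 1) (h₂ : k₂ 1 = d₂ • g₂ 1) :
    H k₁ k₂ = ψ (k₁.det / (d₁ * g₁.det)) d₁ (k₂.det / (d₂ * g₂.det)) d₂ * H g₁ g₂ := by
  have r₁ := congrFun (mul_inv_row_one h₁)
  have r₂ := congrFun (mul_inv_row_one h₂)
  simpa using hH (k₁ * g₁⁻¹) (k₂ * g₂⁻¹) g₁ g₂ _ d₁ _ d₂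
    (by simpa using r₁ 0) (mul_inv_zero_zero h₁) (by simpa [Units.smul_def] using r₁ 1)
    (by simpa using r₂ 0) (mul_inv_zero_zero h₂) (by simpa [Units.smul_def] using r₂ 1)

theorem IsBorelEquivariant.eq_zero_of_row_eq_smul [MulZeroClass A]
    (hH : IsBorelEquivariant ψ H) (hdiag : ∀ g, H g g = 0) {k₁ k₂ : GL (Fin 2) F} {d : Fˣ}
    (h : k₂ 1 = d • k₁ 1) : H k₁ k₂ = 0 := by
  rw [hH.apply_eq_of_row_eq_smul (one_smul _ _).symm h, hdiag, mul_zero]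

theorem IsBorelEquivariant.eq_zero_of_apply_weyl_mul_eq_zero [MulZeroClass A]
    (hH : IsBorelEquivariant ψ H) {k₁ k₂ g : GL (Fin 2) F} (hg₀ : g 0 = k₂ 1) (hg₁ : g 1 = k₁ 1)
    (hg : H g (weyl F * g) = 0) : H k₁ k₂ = 0 := by
  have hk₁ : k₁ 1 = (1 : Fˣ) • g 1 := by rw [hg₁, one_smul]
  have hk₂ : k₂ 1 = (1 : Fˣ) • (weyl F * g) 1 := by rw [weyl_mul_row_one, hg₀, one_smul]
  rw [hH.apply_eq_of_row_eq_smul hk₁ hk₂, hg, mul_zero]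

end Field

theorem norm_eq_of_norm_sub_lt_right {E : Type*} [SeminormedAddCommGroup E]
    [IsUltrametricDist E] {x y : E} (h : ‖x - y‖ < ‖y‖) : ‖x‖ = ‖y‖ := by
  rw [sub_eq_add_neg] at h
  simpa using IsUltrametricDist.norm_eq_of_add_norm_lt_max (h.trans_le (by simp))

section NormedField

variable {F : Type*} [NormedField F]

/-- `GL₂` of the ring of integers of `F`, inside `GL₂(F)`. -/
def integralGL (F : Type*) [NormedField F] : Set (GL (Fin 2) F) :=
  {k | (∀ i j, ‖k i j‖ ≤ 1) ∧ ‖(k : Matrix (Fin 2) (Fin 2) F).det‖ = 1}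

/-- The matrices `[[1, b], [c, 1]]` with `‖b‖ ≤ 1` and `‖c‖ ≤ r`; for `F = ℚ_p` and `r = p ^ (-n)`
this is `J_n`. -/
def unitDiagonalSet (F : Type*) [NormedField F] (r : ℝ) : Set (GL (Fin 2) F) :=
  {j | j 0 0 = 1 ∧ j 1 1 = 1 ∧ ‖j 0 1‖ ≤ 1 ∧ ‖j 1 0‖ ≤ r}

variable {r : ℝ}

theorem norm_det_sub_one_le {j : GL (Fin 2) F} (hj : j ∈ unitDiagonalSet F r) :
    ‖(j.det : F) - 1‖ ≤ r := by
  obtain ⟨h₀₀, h₁₁, h₀₁, h₁₀⟩ := hj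
  calc ‖(j.det : F) - 1‖ = ‖j 0 1‖ * ‖j 1 0‖ := by
        rw [GeneralLinearGroup.val_det_apply, det_fin_two, h₀₀, h₁₁, mul_one, sub_sub_cancel_left,
          norm_neg, norm_mul]
    _ ≤ ‖j 1 0‖ := mul_le_of_le_one_left (norm_nonneg _) h₀₁
    _ ≤ r := h₁₀

theorem norm_zero_one_le_of_mem_mul {g : GL (Fin 2) F}
    (hg : g ∈ diagonalTorus F * unitDiagonalSet F r) : ‖g 0 1‖ ≤ ‖g 0 0‖ := by
  obtain ⟨t, ⟨_, ht⟩, j, ⟨h₀₀, _, h₀₁, _⟩, rfl⟩ := hg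
  simpa [mul_apply, Fin.sum_univ_two, ht, h₀₀] using mul_le_of_le_one_right (norm_nonneg _) h₀₁

theorem norm_one_zero_le_of_mem_mul {g : GL (Fin 2) F}
    (hg : g ∈ diagonalTorus F * unitDiagonalSet F r) (h : ‖g 1 1‖ ≤ 1) : ‖g 1 0‖ ≤ r := by
  obtain ⟨t, ⟨ht, _⟩, j, ⟨_, h₁₁, _, h₁₀⟩, rfl⟩ := hg
  simp only [GeneralLinearGroup.coe_mul, mul_apply, Fin.sum_univ_two, ht, h₁₁, zero_mul, zero_add,
    mul_one, norm_mul] at h ⊢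
  exact (mul_le_of_le_one_left (norm_nonneg _) h).trans h₁₀

theorem exists_mem_unitDiagonalSet (hr : r < 1) {b c : F} (hb : ‖b‖ ≤ 1) (hc : ‖c‖ ≤ r) :
    ∃ j ∈ unitDiagonalSet F r, j 0 1 = b ∧ j 1 0 = c := by
  have hbc : ‖b * c‖ < 1 := by
    rw [norm_mul]
    exact mul_lt_one_of_nonneg_of_lt_one_right hb (norm_nonneg _) (hc.trans_lt hr)
  have hdet : (!![1, b; c, 1]).det ≠ 0 := by
    rw [det_fin_two_of, mul_one, sub_ne_zero]
    intro h
    rw [← h, norm_one] at hbc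
    exact lt_irrefl _ hbc
  exact ⟨GeneralLinearGroup.mkOfDetNeZero _ hdet, ⟨rfl, rfl, hb, hc⟩, rfl, rfl⟩

theorem exists_mem_unitDiagonalSet_rows (hr : r < 1) {k₁ k₂ : GL (Fin 2) F} {d₁ c₂ : Fˣ}
    (hd₁ : k₁ 1 1 = d₁) (hc₂ : k₂ 1 0 = c₂) (hd₁' : ‖(d₁ : F)‖ = 1) (hc₂' : ‖(c₂ : F)‖ = 1)
    (hc₁ : ‖k₁ 1 0‖ ≤ r) (hd₂ : ‖k₂ 1 1‖ ≤ 1) :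
    ∃ j ∈ unitDiagonalSet F r, k₁ 1 = d₁ • j 1 ∧ k₂ 1 = c₂ • (weyl F * j) 1 := by
  obtain ⟨j, hj, h₀₁, h₁₀⟩ := exists_mem_unitDiagonalSet (b := k₂ 1 1 / c₂) (c := k₁ 1 0 / d₁) hr
    (by rwa [norm_div, hc₂', div_one]) (by rwa [norm_div, hd₁', div_one])
  refine ⟨j, hj, ?_, ?_⟩
  · ext i
    fin_cases i <;> simp [Units.smul_def, h₁₀, hj.2.1, hd₁, mul_div_cancel₀]
  · rw [weyl_mul_row_one]
    ext i
    fin_cases i <;> simp [Units.smul_def, h₀₁, hj.1, hc₂, mul_div_cancel₀]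

theorem borelWeight_eq_of_norm_eq_one {A : Type*} [Monoid A] {μ₁ μ'₁ μ₂ μ'₂ : Fˣ →* Aˣ}
    {δ : F → A} (hμ₁ : ∀ u : Fˣ, ‖(u : F)‖ = 1 → μ₁ u = 1)
    (hμ'₂ : ∀ u : Fˣ, ‖(u : F)‖ = 1 → μ'₂ u = 1) (hδ : ∀ x : F, ‖x‖ = 1 → δ x = 1)
    {a₁ d₁ a₂ d₂ : Fˣ} (ha₁ : ‖(a₁ : F)‖ = 1) (hd₁ : ‖(d₁ : F)‖ = 1) (ha₂ : ‖(a₂ : F)‖ = 1)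
    (hd₂ : ‖(d₂ : F)‖ = 1) :
    borelWeight μ₁ μ'₁ μ₂ μ'₂ δ a₁ d₁ a₂ d₂ = μ'₁ d₁ * μ₂ a₂ := by
  simp [borelWeight, hμ₁ a₁ ha₁, hμ'₂ d₂ hd₂, hδ, ha₁, hd₁, ha₂, hd₂]

variable [IsUltrametricDist F]

theorem norm_det_eq_one (hr : r < 1) {j : GL (Fin 2) F} (hj : j ∈ unitDiagonalSet F r) :
    ‖(j.det : F)‖ = 1 := by
  have h : ‖(j.det : F) - 1‖ < ‖(1 : F)‖ := by
    simpa using (norm_det_sub_one_le hj).trans_lt hr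
  rw [norm_eq_of_norm_sub_lt_right h, norm_one]

theorem norm_diag_eq_one {k : GL (Fin 2) F} (hk : k ∈ integralGL F) (hc : ‖k 1 0‖ < 1) :
    ‖k 0 0‖ = 1 ∧ ‖k 1 1‖ = 1 := by
  obtain ⟨hint, hdet⟩ := hk
  have hbc : ‖k 0 1 * k 1 0‖ < 1 := by
    rw [norm_mul]
    exact mul_lt_one_of_nonneg_of_lt_one_right (hint 0 1) (norm_nonneg _) hc
  have had : ‖k 0 0‖ * ‖k 1 1‖ = 1 := by
    rw [← norm_mul, ← hdet]
    apply norm_eq_of_norm_sub_lt_right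
    rwa [hdet, det_fin_two, sub_sub_cancel]
  constructor
  · exact (hint 0 0).antisymm (had ▸ mul_le_of_le_one_right (norm_nonneg _) (hint 1 1))
  · exact (hint 1 1).antisymm (had ▸ mul_le_of_le_one_left (norm_nonneg _) (hint 0 0))

variable {A : Type*} {H : GL (Fin 2) F → GL (Fin 2) F → A}

theorem IsBorelEquivariant.eq_zero_of_notMem_mul [MulZeroClass A] {ψ : Fˣ → Fˣ → Fˣ → Fˣ → A}
    (hH : IsBorelEquivariant ψ H) (hdiag : ∀ g, H g g = 0)
    (hsupp : ∀ g ∉ diagonalTorus F * unitDiagonalSet F r, H g (weyl F * g) = 0)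
    {k₁ k₂ : GL (Fin 2) F} (hk₁ : k₁ ∈ integralGL F) (hk₂ : k₂ ∈ integralGL F)
    (hk : ¬(‖k₁ 1 0‖ ≤ r ∧ ‖k₂ 1 0‖ = 1)) : H k₁ k₂ = 0 := by
  rcases row_one_eq_smul_or_exists_rows k₁ k₂ with ⟨d, hd⟩ | ⟨g, hg₀, hg₁⟩
  · exact hH.eq_zero_of_row_eq_smul hdiag hd
  · refine hH.eq_zero_of_apply_weyl_mul_eq_zero hg₀ hg₁ (hsupp g fun hg => hk ⟨?_, ?_⟩)
    · rw [← hg₁]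
      exact norm_one_zero_le_of_mem_mul hg (by rw [hg₁]; exact hk₁.1 1 1)
    · have hle : ‖k₂ 1 1‖ ≤ ‖k₂ 1 0‖ := by
        simpa only [hg₀] using norm_zero_one_le_of_mem_mul hg
      by_contra hne
      have hlt : ‖k₂ 1 0‖ < 1 := lt_of_le_of_ne (hk₂.1 1 0) hne
      exact absurd (norm_diag_eq_one hk₂ hlt).2 (hle.trans_lt hlt).ne

variable [MonoidWithZero A] {μ₁ μ'₁ μ₂ μ'₂ : Fˣ →* Aˣ} {δ : F → A}

theorem IsBorelEquivariant.apply_eq_of_norm_le (hr : r < 1)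
    (hμ₁ : ∀ u : Fˣ, ‖(u : F)‖ = 1 → μ₁ u = 1) (hμ'₂ : ∀ u : Fˣ, ‖(u : F)‖ = 1 → μ'₂ u = 1)
    (hμ₂ : ∀ u : Fˣ, ‖(u : F) - 1‖ ≤ r → μ₂ u = 1) (hδ : ∀ x : F, ‖x‖ = 1 → δ x = 1)
    (hH : IsBorelEquivariant (borelWeight μ₁ μ'₁ μ₂ μ'₂ δ) H)
    (hHJ : ∀ j ∈ unitDiagonalSet F r, H j (weyl F * j) = 1)
    {k₁ k₂ : GL (Fin 2) F} (hk₁ : k₁ ∈ integralGL F) (hk₂ : k₂ ∈ integralGL F)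
    (hc₁ : ‖k₁ 1 0‖ ≤ r) (hc₂ : ‖k₂ 1 0‖ = 1) {d₁ u : Fˣ} (hd₁ : k₁ 1 1 = d₁)
    (hu : (u : F) = -(k₂ : Matrix (Fin 2) (Fin 2) F).det / k₂ 1 0) :
    H k₁ k₂ = μ'₁ d₁ * μ₂ u := by
  have hd₁' : ‖(d₁ : F)‖ = 1 := hd₁ ▸ (norm_diag_eq_one hk₁ (hc₁.trans_lt hr)).2
  obtain ⟨c₂, hc₂'⟩ : IsUnit (k₂ 1 0) := by
    rw [isUnit_iff_ne_zero, ← norm_ne_zero_iff, hc₂]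
    exact one_ne_zero
  rw [← hc₂'] at hc₂ hu
  obtain ⟨j, hj, hrow₁, hrow₂⟩ :=
    exists_mem_unitDiagonalSet_rows hr hd₁ hc₂'.symm hd₁' hc₂ hc₁ (hk₂.1 1 1)
  have hjdet : ‖(j.det : F)‖ = 1 := norm_det_eq_one hr hj
  have hdet₁ : ‖(k₁.det : F)‖ = 1 := hk₁.2
  have hdet₂ : ‖(k₂.det : F)‖ = 1 := hk₂.2
  have ha₂ : k₂.det / (c₂ * (weyl F * j).det) = u / j.det := by
    have hu' : u = -k₂.det / c₂ := Units.ext (by simpa using hu)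
    rw [det_weyl_mul, hu', mul_neg, div_neg, neg_div, neg_div, div_div]
  have hμ₂u : μ₂ (u / j.det) = μ₂ u := by
    rw [map_div, hμ₂ _ (norm_det_sub_one_le hj), div_one]
  rw [hH.apply_eq_of_row_eq_smul hrow₁ hrow₂, hHJ j hj, mul_one, ha₂,
    borelWeight_eq_of_norm_eq_one hμ₁ hμ'₂ hδ _ hd₁' _ hc₂, hμ₂u]
  · rw [Units.val_div_eq_div_val, Units.val_mul, norm_div, norm_mul, hdet₁, hd₁', hjdet, mul_one,
      div_one]
  · rw [Units.val_div_eq_div_val, norm_div, hu, norm_div, norm_neg,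
      ← GeneralLinearGroup.val_det_apply, hdet₂, hc₂, hjdet, div_one, div_one]

theorem stmt11_general (hr : r < 1)
    (hμ₁ : ∀ u : Fˣ, ‖(u : F)‖ = 1 → μ₁ u = 1) (hμ'₂ : ∀ u : Fˣ, ‖(u : F)‖ = 1 → μ'₂ u = 1)
    (hμ₂ : ∀ u : Fˣ, ‖(u : F) - 1‖ ≤ r → μ₂ u = 1) (hδ : ∀ x : F, ‖x‖ = 1 → δ x = 1)
    (hH : IsBorelEquivariant (borelWeight μ₁ μ'₁ μ₂ μ'₂ δ) H) (hdiag : ∀ g, H g g = 0)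
    (hHJ : ∀ j ∈ unitDiagonalSet F r, H j (weyl F * j) = 1)
    (hsupp : ∀ g ∉ diagonalTorus F * unitDiagonalSet F r, H g (weyl F * g) = 0)
    {k₁ k₂ : GL (Fin 2) F} (hk₁ : k₁ ∈ integralGL F) (hk₂ : k₂ ∈ integralGL F) :
    (∀ d₁ u : Fˣ, ‖k₁ 1 0‖ ≤ r → ‖k₂ 1 0‖ = 1 → k₁ 1 1 = d₁ →
      (u : F) = -(k₂ : Matrix (Fin 2) (Fin 2) F).det / k₂ 1 0 → H k₁ k₂ = μ'₁ d₁ * μ₂ u) ∧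
    (¬(‖k₁ 1 0‖ ≤ r ∧ ‖k₂ 1 0‖ = 1) → H k₁ k₂ = 0) :=
  ⟨fun _ _ hc₁ hc₂ => hH.apply_eq_of_norm_le hr hμ₁ hμ'₂ hμ₂ hδ hHJ hk₁ hk₂ hc₁ hc₂,
    hH.eq_zero_of_notMem_mul hdiag hsupp hk₁ hk₂⟩

end NormedField

section Iwahori

theorem zpow_neg_lt_one {n : ℕ} (hn : 1 ≤ n) : (p : ℝ) ^ (-(n : ℤ)) < 1 :=
  zpow_lt_one_of_neg₀ (mod_cast (Fact.out : p.Prime).one_lt) (by lia)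

theorem inI_iff {n : ℕ} (hn : 1 ≤ n) {k : GL (Fin 2) ℚ_[p]} (hk : inK p k) :
    inI p n k ↔ ‖mat p k 1 0‖ ≤ (p : ℝ) ^ (-(n : ℤ)) := by
  refine ⟨fun h => (h.2.resolve_left (by lia)).2.2, fun hc => ⟨hk, .inr ?_⟩⟩
  obtain ⟨h₀₀, h₁₁⟩ := norm_diag_eq_one hk (hc.trans_lt (zpow_neg_lt_one p hn))
  exact ⟨h₀₀, h₁₁, hc⟩

theorem not_inI_one_iff {k : GL (Fin 2) ℚ_[p]} (hk : inK p k) :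
    ¬inI p 1 k ↔ ‖mat p k 1 0‖ = 1 := by
  have hlt : inI p 1 k ↔ ‖mat p k 1 0‖ < 1 := by
    rw [inI_iff p le_rfl hk, Padic.norm_le_pow_iff_norm_lt_pow_add_one]
    simp
  rw [hlt, not_lt, (hk.1 1 0).ge_iff_eq]

end Iwahori

/-- Lemma «FV»: the values of `H = ext(h)` on `K × K`, where `h` is the
function supported on `T J_n` with `h ≡ 1` on `J_n`. Here `n ≥ 1`,
`μ₁` and `μ'₂` are unramified and `μ₂` is trivial on `1 + p^n ℤ_p`. -/
theorem stmt11 (n : ℕ) (hn : 1 ≤ n)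
    (μ₁ μ'₁ μ₂ μ'₂ : ℚ_[p]ˣ →* ℂˣ)
    (hμ₁ : Unramified p μ₁) (hμ'₂ : Unramified p μ'₂)
    (hμ₂ : TrivialOnOnePlusP p n μ₂)
    (h : GL (Fin 2) ℚ_[p] → ℂ)
    (hhT : ∀ (t g : GL (Fin 2) ℚ_[p]) (a d : ℚ_[p]ˣ),
      inT p t → mat p t 0 0 = a → mat p t 1 1 = d →
      h (t * g) = (μ₁ a : ℂ) * (μ'₁ d : ℂ) * (μ'₂ a : ℂ) * (μ₂ d : ℂ) * h g)
    (hhJ : ∀ j : GL (Fin 2) ℚ_[p], inJ p n j → h j = 1)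
    (hhsupp : ∀ g : GL (Fin 2) ℚ_[p],
      (¬ ∃ t j : GL (Fin 2) ℚ_[p], inT p t ∧ inJ p n j ∧ g = t * j) → h g = 0)
    (H : GL (Fin 2) ℚ_[p] → GL (Fin 2) ℚ_[p] → ℂ)
    (hHB : ∀ (b₁ b₂ g₁ g₂ : GL (Fin 2) ℚ_[p]) (a₁ d₁ a₂ d₂ : ℚ_[p]ˣ),
      mat p b₁ 1 0 = 0 → mat p b₁ 0 0 = a₁ → mat p b₁ 1 1 = d₁ →
      mat p b₂ 1 0 = 0 → mat p b₂ 0 0 = a₂ → mat p b₂ 1 1 = d₂ →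
      H (b₁ * g₁) (b₂ * g₂) =
        (μ₁ a₁ : ℂ) * (μ'₁ d₁ : ℂ) * (μ₂ a₂ : ℂ) * (μ'₂ d₂ : ℂ) *
          (Real.sqrt ‖((a₁ : ℚ_[p]) * (a₂ : ℚ_[p])) /
            ((d₁ : ℚ_[p]) * (d₂ : ℚ_[p]))‖ : ℂ) * H g₁ g₂)
    (hHdiag : ∀ g : GL (Fin 2) ℚ_[p], H g g = 0)
    (hHw : ∀ g : GL (Fin 2) ℚ_[p], H g (wEl p * g) = h g) :
    ∀ k₁ k₂ : GL (Fin 2) ℚ_[p],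
      (∀ (d₁ u : ℚ_[p]ˣ), inI p n k₁ → inK p k₂ → ¬ inI p 1 k₂ →
        mat p k₁ 1 1 = d₁ →
        (u : ℚ_[p]) = -(mat p k₂).det / mat p k₂ 1 0 →
        H k₁ k₂ = (μ'₁ d₁ : ℂ) * (μ₂ u : ℂ)) ∧
      (inK p k₁ → inK p k₂ → ¬ (inI p n k₁ ∧ ¬ inI p 1 k₂) →
        H k₁ k₂ = 0) := by
  have hvalue {k₁ k₂ : GL (Fin 2) ℚ_[p]} (hk₁ : inK p k₁) (hk₂ : inK p k₂) :=
    stmt11_general (zpow_neg_lt_one p hn) hμ₁ hμ'₂ hμ₂ (δ := fun x => (Real.sqrt ‖x‖ : ℂ))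
      (fun x hx => by simp [hx]) hHB hHdiag (fun j hj => (hHw j).trans (hhJ j hj))
      (fun g hg => (hHw g).trans (hhsupp g fun ⟨t, j, ht, hj, e⟩ => hg ⟨t, ht, j, hj, e.symm⟩))
      hk₁ hk₂
  refine fun k₁ k₂ => ⟨fun d₁ u hI₁ hk₂ hI₂ => ?_, fun hk₁ hk₂ hI => ?_⟩
  · exact (hvalue hI₁.1 hk₂).1 d₁ u ((inI_iff p hn hI₁.1).1 hI₁) ((not_inI_one_iff p hk₂).1 hI₂)
  · rw [inI_iff p hn hk₁, not_inI_one_iff p hk₂] at hI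
    exact (hvalue hk₁ hk₂).2 hI
end
end

section
/- Let n >= 1 be an integer and assume mu_1, mu'_1, mu_2, mu'_2 are all unramified. Set alpha_i = mu_i(p)^{-1} * sqrt(p) and beta_i = mu'_i(p)^{-1} / sqrt(p), assume alpha_i ≠ beta_i for i = 1, 2, and put lambda_i = (1 - beta_i/alpha_i)^{-1}. For i = 1, 2 let v_i : G -> C be a function such that v_i(b*g) = mu_i(a) * mu'_i(d) * |a/d|^{1/2} * v_i(g) for every b = [[a,b0],[0,d]] in B and g in G, v_i(g*k) = v_i(g) for every k in K and g in G, and v_i(1) = 1. Let h : G -> C satisfy h(t*g) = chi_1(t) * chi'_2(t) * h(g) for all t in T and g in G, h(j) = 1 for all j in J_n, and h(g) = 0 whenever g is not of the form t*j with t in T and j in J_n; and let H : G × G -> C satisfy H(b_1*g_1, b_2*g_2) = chi_1(b_1) * chi_2(b_2) * delta(b_1*b_2)^{1/2} * H(g_1,g_2) for all b_1, b_2 in B and g_1, g_2 in G, H(g,g) = 0 and H(g, w*g) = h(g) for all g in G. Then for all (g_1,g_2) in G × G: H(g_1,g_2) = lambda_1 * lambda_2 * alpha_1^{-n} * (v_1(g_1*gamma^n)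 - beta_1 * v_1(g_1*gamma^{n-1})) * (v_2(g_2) - alpha_2^{-1} * v_2(g_2*gamma)). -/
open Matrix

noncomputable section

variable (p : ℕ) [Fact p.Prime]

/-!
By the Bruhat decomposition, `G × G` is the union of the `B × B`-orbits of the points `(g, g)` and
`(g, w g)`, so both sides of the formula, being `B × B`-equivariant, need only be compared at such
points. By the Iwasawa decomposition, the value of a spherical vector at a matrix depends only
on the determinant and on the entry of larger absolute value in the bottom row `(c, d)`. So
`γ^n v₁ - β₁ γ^(n-1) v₁` is supported on `|c| p^n ≤ |d|` and `v₂ - α₂⁻¹ γ v₂` on `|d| ≤ |c|`. These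
conditions are incompatible, which gives the value `0` at `(g, g)`; at `(g, w g)` they read
`|c| p^n ≤ |d|` and `|b| ≤ |a|`, so that `g` lies in `T J_n`, and on `J_n` both sides are
constant.
-/

section LinearAlgebra

variable {F : Type*} [Field F]

/-- The element `[[a, b], [0, d]]` of the Borel subgroup of `GL₂(F)`. -/
def upperTriangular (a : Fˣ) (b : F) (d : Fˣ) : GL (Fin 2) F :=
  GeneralLinearGroup.mkOfDetNeZero !![(a : F), b; 0, d] (by simp)

/-- The element `[[1, 0], [x, 1]]` of the unipotent group opposite to the Borel subgroup. -/
def lowerUnipotent (x : F) : GL (Fin 2) F :=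
  GeneralLinearGroup.mkOfDetNeZero !![1, 0; x, 1] (by simp)

lemma coe_upperTriangular (a : Fˣ) (b : F) (d : Fˣ) :
    (upperTriangular a b d : Matrix (Fin 2) (Fin 2) F) = !![(a : F), b; 0, d] := rfl

lemma coe_lowerUnipotent (x : F) :
    (lowerUnipotent x : Matrix (Fin 2) (Fin 2) F) = !![1, 0; x, 1] := rfl

lemma coe_det_fin_two (g : GL (Fin 2) F) :
    ((GeneralLinearGroup.det g : Fˣ) : F) = g 0 0 * g 1 1 - g 0 1 * g 1 0 :=
  Matrix.det_fin_two _

lemma ne_zero_or_ne_zero_of_row (g : GL (Fin 2) F) (i : Fin 2) : g i 0 ≠ 0 ∨ g i 1 ≠ 0 := by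
  have hdet := (GeneralLinearGroup.det g).ne_zero
  rw [coe_det_fin_two] at hdet
  by_contra! hrow
  fin_cases i <;> simp_all

lemma eq_upperTriangular_mul_lowerUnipotent {g : GL (Fin 2) F} {d : Fˣ} (hd : g 1 1 = d) :
    g = upperTriangular (GeneralLinearGroup.det g / d) (g 0 1) d * lowerUnipotent (g 1 0 / d) := by
  have hdet := coe_det_fin_two g
  rw [hd] at hdet
  ext i j
  rw [GeneralLinearGroup.coe_mul, coe_upperTriangular, coe_lowerUnipotent]
  fin_cases i <;> fin_cases j <;> simp [hd, hdet] <;> field_simp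
  ring

lemma eq_upperTriangular_mul_weyl_mul {w g : GL (Fin 2) F}
    (hw : (w : Matrix (Fin 2) (Fin 2) F) = !![0, 1; 1, 0]) {c : Fˣ} (hc : g 1 0 = c) :
    g = upperTriangular (-GeneralLinearGroup.det g / c) (g 0 0) c *
      (w * upperTriangular 1 (g 1 1 / c) 1) := by
  have hdet := coe_det_fin_two g
  rw [hc] at hdet
  ext i j
  rw [GeneralLinearGroup.coe_mul, GeneralLinearGroup.coe_mul, coe_upperTriangular,
    coe_upperTriangular, hw]
  fin_cases i <;> fin_cases j <;> simp [hc, hdet] <;> field_simp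
  ring

lemma bruhat_decomposition {w : GL (Fin 2) F}
    (hw : (w : Matrix (Fin 2) (Fin 2) F) = !![0, 1; 1, 0]) (g : GL (Fin 2) F) :
    (∃ a b d, g = upperTriangular a b d) ∨
      ∃ a b d x, g = upperTriangular a b d * (w * upperTriangular 1 x 1) := by
  by_cases hc : g 1 0 = 0
  · have hd : g 1 1 ≠ 0 := (ne_zero_or_ne_zero_of_row g 1).resolve_left (not_not.2 hc)
    have hg := eq_upperTriangular_mul_lowerUnipotent (Units.val_mk0 hd).symm
    have hone : lowerUnipotent (0 : F) = 1 := Units.ext Matrix.one_fin_two.symm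
    rw [hc, zero_div, hone, mul_one] at hg
    exact .inl ⟨_, _, _, hg⟩
  · exact .inr ⟨_, _, _, _, eq_upperTriangular_mul_weyl_mul hw (Units.val_mk0 hc).symm⟩

lemma weyl_mul_upperTriangular {w : GL (Fin 2) F}
    (hw : (w : Matrix (Fin 2) (Fin 2) F) = !![0, 1; 1, 0]) (a d : Fˣ) :
    w * upperTriangular a 0 d = upperTriangular d 0 a * w := by
  ext i j
  rw [GeneralLinearGroup.coe_mul, GeneralLinearGroup.coe_mul, coe_upperTriangular,
    coe_upperTriangular, hw]
  fin_cases i <;> fin_cases j <;> simp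

lemma upperTriangular_mul_upperTriangular_inv (a d : Fˣ) :
    upperTriangular a 0 d * upperTriangular a⁻¹ 0 d⁻¹ = 1 := by
  ext i j
  rw [GeneralLinearGroup.coe_mul, coe_upperTriangular, coe_upperTriangular]
  fin_cases i <;> fin_cases j <;> simp

end LinearAlgebra

lemma inv_sub_mul_pow_mul_sub {F : Type*} [Field F] {α₁ β₁ α₂ β₂ : F} (hα₁ : α₁ ≠ 0) (hα₂ : α₂ ≠ 0)
    (m : ℕ) : ((α₁ - β₁) * α₁ ^ m * (β₂ - α₂))⁻¹ =
      (1 - β₁ / α₁)⁻¹ * (1 - β₂ / α₂)⁻¹ * α₁ ^ (-((m + 1 : ℕ) : ℤ)) * -α₂⁻¹ := by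
  rw [one_sub_div hα₁, one_sub_div hα₂, _root_.zpow_neg, zpow_natCast, ← neg_sub α₂ β₂]
  simp only [mul_inv, inv_neg, inv_div, pow_succ]
  field_simp

section PrincipalSeries

variable {p}

/-- The character `(a, d) ↦ μ(a) μ'(d) |a / d|^{1/2}` of the torus from which the normalised
principal series is induced. -/
def inducingChar (μ μ' : ℚ_[p]ˣ →* ℂˣ) : ℚ_[p]ˣ × ℚ_[p]ˣ →* ℂ where
  toFun x := μ x.1 * μ' x.2 * (Real.sqrt ‖(x.1 : ℚ_[p]) / x.2‖ : ℂ)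
  map_one' := by simp
  map_mul' x y := by
    have hnorm : ‖((x * y).1 : ℚ_[p]) / (x * y).2‖ =
        ‖(x.1 : ℚ_[p]) / x.2‖ * ‖(y.1 : ℚ_[p]) / y.2‖ := by
      rw [← norm_mul, div_mul_div_comm]
      rfl
    rw [hnorm, Real.sqrt_mul (norm_nonneg _)]
    simp only [Prod.fst_mul, Prod.snd_mul, map_mul, Units.val_mul, Complex.ofReal_mul]
    ring

/-- The functions on `GL₂(ℚ_p)` transforming on the left under the Borel subgroup by
`inducingChar μ μ'`. No smoothness is imposed. -/
def principalSeries (μ μ' : ℚ_[p]ˣ →* ℂˣ) : Submodule ℂ (GL (Fin 2) ℚ_[p] → ℂ) where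
  carrier := {f | ∀ a b d g, f (upperTriangular a b d * g) = inducingChar μ μ' (a, d) * f g}
  zero_mem' := by simp
  add_mem' hf hf' a b d g := by rw [Pi.add_apply, hf, hf', Pi.add_apply, mul_add]
  smul_mem' c f hf a b d g := by
    rw [Pi.smul_apply, hf, Pi.smul_apply, smul_eq_mul, smul_eq_mul, mul_left_comm]

/-- The Satake parameter `α = μ(p)⁻¹ √p`, as a value of the inducing character. -/
def satakeAlpha (μ μ' : ℚ_[p]ˣ →* ℂˣ) : ℂ := inducingChar μ μ' ((pu p)⁻¹, 1)

/-- The Satake parameter `β = μ'(p)⁻¹ / √p`, as a value of the inducing character. -/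
def satakeBeta (μ μ' : ℚ_[p]ˣ →* ℂˣ) : ℂ := inducingChar μ μ' (1, (pu p)⁻¹)

variable {μ μ' μ₁ μ'₁ μ₂ μ'₂ : ℚ_[p]ˣ →* ℂˣ}

lemma satakeAlpha_eq : satakeAlpha μ μ' = (μ (pu p) : ℂ)⁻¹ * (Real.sqrt p : ℂ) := by
  simp [satakeAlpha, inducingChar, pu]

lemma satakeBeta_eq : satakeBeta μ μ' = (μ' (pu p) : ℂ)⁻¹ / (Real.sqrt p : ℂ) := by
  simp [satakeBeta, inducingChar, pu, div_eq_mul_inv]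

lemma satakeAlpha_ne_zero (μ μ' : ℚ_[p]ˣ →* ℂˣ) : satakeAlpha μ μ' ≠ 0 :=
  ((Group.isUnit _).map (inducingChar μ μ')).ne_zero

lemma inducingChar_mul_inducingChar_swap (a d : ℚ_[p]ˣ) :
    inducingChar μ₁ μ'₁ (a, d) * inducingChar μ₂ μ'₂ (d, a) =
      (μ₁ a : ℂ) * μ'₁ d * μ'₂ a * μ₂ d := by
  have hsqrt : Real.sqrt ‖(a : ℚ_[p]) / d‖ * Real.sqrt ‖(d : ℚ_[p]) / a‖ = 1 := by
    rw [← Real.sqrt_mul (norm_nonneg _), ← norm_mul, div_mul_div_cancel₀ d.ne_zero,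
      div_self a.ne_zero, norm_one, Real.sqrt_one]
  have hsqrt' := congrArg Complex.ofReal hsqrt
  push_cast at hsqrt'
  simp only [inducingChar, MonoidHom.coe_mk, OneHom.coe_mk]
  linear_combination (μ₁ a : ℂ) * μ'₁ d * μ'₂ a * μ₂ d * hsqrt'

lemma apply_unipotent_mul {f : GL (Fin 2) ℚ_[p] → ℂ} (hf : f ∈ principalSeries μ μ')
    (x : ℚ_[p]) (g : GL (Fin 2) ℚ_[p]) : f (upperTriangular 1 x 1 * g) = f g := by
  rw [hf, ← Prod.one_eq_mk, map_one, one_mul]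

lemma eq_mul_of_mem_principalSeries {H : GL (Fin 2) ℚ_[p] → GL (Fin 2) ℚ_[p] → ℂ}
    {f₁ f₂ : GL (Fin 2) ℚ_[p] → ℂ}
    (hf₁ : f₁ ∈ principalSeries μ₁ μ'₁) (hf₂ : f₂ ∈ principalSeries μ₂ μ'₂)
    (hH₁ : ∀ g₂, (H · g₂) ∈ principalSeries μ₁ μ'₁) (hH₂ : ∀ g₁, H g₁ ∈ principalSeries μ₂ μ'₂)
    (hdiag : ∀ g, H g g = f₁ g * f₂ g) (hweyl : ∀ g, H g (wEl p * g) = f₁ g * f₂ (wEl p * g))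
    (g₁ g₂ : GL (Fin 2) ℚ_[p]) : H g₁ g₂ = f₁ g₁ * f₂ g₂ := by
  obtain ⟨a, b, d, hg⟩ | ⟨a, b, d, x, hg⟩ := bruhat_decomposition (w := wEl p) rfl (g₂ * g₁⁻¹)
  · rw [eq_mul_of_mul_inv_eq hg, hH₂, hf₂, hdiag, mul_left_comm]
  · set y := upperTriangular 1 x 1 * g₁
    have hH : H g₁ (wEl p * y) = f₁ g₁ * f₂ (wEl p * y) := by
      rw [← apply_unipotent_mul hf₁ x, ← hweyl]
      exact (apply_unipotent_mul (hH₁ _) x g₁).symm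
    rw [eq_mul_of_mul_inv_eq hg, mul_assoc, mul_assoc, hH₂, hf₂, hH, mul_left_comm]

end PrincipalSeries

section Norm

variable {p}

lemma norm_le_norm_mul_pow_of_lt {x y : ℚ_[p]} {m : ℕ} (hlt : ‖y‖ < ‖x‖ * (p : ℝ) ^ (m + 1)) :
    ‖y‖ ≤ ‖x‖ * (p : ℝ) ^ m := by
  have hx : 0 < ‖x‖ := by
    by_contra! hx
    exact (norm_nonneg y).not_gt (by simpa [norm_le_zero_iff.1 hx] using hlt)
  have hquot : ‖y / x‖ < (p : ℝ) ^ ((m : ℤ) + 1) := by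
    rw [norm_div, div_lt_iff₀' hx]
    exact_mod_cast hlt
  rw [← Padic.norm_le_pow_iff_norm_lt_pow_add_one, norm_div, div_le_iff₀' hx] at hquot
  exact_mod_cast hquot

lemma norm_mul_pow_le_one_iff {x : ℚ_[p]} {n : ℕ} :
    ‖x‖ * (p : ℝ) ^ n ≤ 1 ↔ ‖x‖ ≤ (p : ℝ) ^ (-(n : ℤ)) := by
  rw [_root_.zpow_neg, zpow_natCast, ← one_div,
    le_div_iff₀ (pow_pos (mod_cast (Fact.out : p.Prime).pos) n)]

end Norm

section TorusCell

variable {p}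

lemma norm_det_eq_one_of_inJ {n : ℕ} (hn : n ≠ 0) {j : GL (Fin 2) ℚ_[p]} (hj : inJ p n j) :
    ‖((GeneralLinearGroup.det j : ℚ_[p]ˣ) : ℚ_[p])‖ = 1 := by
  obtain ⟨ha, hd, hb, hc⟩ := hj
  simp only [mat] at ha hd hb hc
  have hc_lt : ‖j 1 0‖ < 1 := hc.trans_lt <|
    zpow_lt_one_of_neg₀ (mod_cast (Fact.out : p.Prime).one_lt) (by omega)
  have hbc : ‖-(j 0 1 * j 1 0)‖ < 1 := by
    rw [norm_neg, norm_mul]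
    exact mul_lt_one_of_nonneg_of_lt_one_right hb (norm_nonneg _) hc_lt
  rw [coe_det_fin_two, ha, hd, mul_one, sub_eq_add_neg,
    Padic.add_eq_max_of_ne (by rw [norm_one]; exact hbc.ne'), norm_one, max_eq_left hbc.le]

lemma exists_eq_upperTriangular_of_inT {t : GL (Fin 2) ℚ_[p]} (ht : inT p t) :
    ∃ a d, t = upperTriangular a 0 d := by
  obtain ⟨hc, hb⟩ := ht
  simp only [mat] at hc hb
  have ha : t 0 0 ≠ 0 := (ne_zero_or_ne_zero_of_row t 0).resolve_right (not_not.2 hb)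
  have hd : t 1 1 ≠ 0 := (ne_zero_or_ne_zero_of_row t 1).resolve_left (not_not.2 hc)
  refine ⟨Units.mk0 _ ha, Units.mk0 _ hd, ?_⟩
  ext i j
  rw [coe_upperTriangular]
  fin_cases i <;> fin_cases j <;> simp [hb, hc]

lemma exists_inT_inJ_eq_mul {n : ℕ} {g : GL (Fin 2) ℚ_[p]} (hba : ‖g 0 1‖ ≤ ‖g 0 0‖)
    (hcd : ‖g 1 0‖ * (p : ℝ) ^ n ≤ ‖g 1 1‖) : ∃ t j, inT p t ∧ inJ p n j ∧ g = t * j := by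
  have ha : g 0 0 ≠ 0 := fun ha ↦ (ne_zero_or_ne_zero_of_row g 0).elim (· ha)
    (· (norm_le_zero_iff.1 (by simpa [ha] using hba)))
  have hd : g 1 1 ≠ 0 := by
    intro hd
    have hpow : (0 : ℝ) < (p : ℝ) ^ n := pow_pos (mod_cast (Fact.out : p.Prime).pos) n
    have hc : ‖g 1 0‖ ≤ 0 := nonpos_of_mul_nonpos_left (by simpa [hd] using hcd) hpow
    exact (ne_zero_or_ne_zero_of_row g 1).elim (· (norm_le_zero_iff.1 hc)) (· hd)
  set a := Units.mk0 _ ha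
  set d := Units.mk0 _ hd
  have hj : mat p (upperTriangular a⁻¹ 0 d⁻¹ * g) = !![1, g 0 1 / g 0 0; g 1 0 / g 1 1, 1] := by
    rw [mat, GeneralLinearGroup.coe_mul, coe_upperTriangular]
    ext i j
    fin_cases i <;> fin_cases j <;> simp [a, d, Matrix.mul_apply, ha, hd, div_eq_inv_mul]
  have hg : g = upperTriangular a 0 d * (upperTriangular a⁻¹ 0 d⁻¹ * g) := by
    rw [← mul_assoc, upperTriangular_mul_upperTriangular_inv, one_mul]
  refine ⟨_, _, ⟨rfl, rfl⟩, ?_, hg⟩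
  rw [inJ, hj]
  refine ⟨rfl, rfl, ?_, norm_mul_pow_le_one_iff.1 ?_⟩
  · simpa using div_le_one_of_le₀ hba (norm_nonneg _)
  · simpa [div_mul_eq_mul_div] using div_le_one_of_le₀ hcd (norm_nonneg _)

lemma weyl_mul_apply_one (g : GL (Fin 2) ℚ_[p]) (j : Fin 2) : (wEl p * g) 1 j = g 0 j := by
  simp [wEl, GeneralLinearGroup.mkOfDetNeZero, Matrix.mul_apply]

end TorusCell

section Spherical

variable {p}

/-- The spherical vector of the principal series of `μ, μ'`: right invariant under `GL₂(ℤ_p)`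
and normalised by its value `1` at the identity. -/
structure IsNormalizedSpherical (μ μ' : ℚ_[p]ˣ →* ℂˣ) (v : GL (Fin 2) ℚ_[p] → ℂ) : Prop where
  mem_principalSeries : v ∈ principalSeries μ μ'
  apply_mul_of_inK : ∀ g k, inK p k → v (g * k) = v g
  apply_one : v 1 = 1

/-- The vector `(γ - x) γ^m v`, where `γ` acts by right translation. When `x` is a
Satake parameter of the spherical vector `v`, it is a translate of a `p`-stabilisation of `v`. -/
def stabilization (x : ℂ) (m : ℕ) (v : GL (Fin 2) ℚ_[p] → ℂ) : GL (Fin 2) ℚ_[p] → ℂ :=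
  fun g ↦ v (g * gamma p ^ (m + 1)) - x * v (g * gamma p ^ m)

variable {μ μ' μ₁ μ'₁ μ₂ μ'₂ : ℚ_[p]ˣ →* ℂˣ} {v v₁ v₂ : GL (Fin 2) ℚ_[p] → ℂ}
  {x : ℂ} {m : ℕ} {g : GL (Fin 2) ℚ_[p]}

lemma mul_gamma_pow_apply (g : GL (Fin 2) ℚ_[p]) (m : ℕ) (i j : Fin 2) :
    (g * gamma p ^ m) i j = g i j * ![(p : ℚ_[p])⁻¹, 1] j ^ m := by
  have hgamma : (gamma p : Matrix (Fin 2) (Fin 2) ℚ_[p]) = diagonal ![(p : ℚ_[p])⁻¹, 1] := by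
    simp [gamma, GeneralLinearGroup.mkOfDetNeZero, diagonal_fin_two]
  rw [GeneralLinearGroup.coe_mul, Units.val_pow_eq_pow_val, hgamma, diagonal_pow, mul_diagonal,
    Pi.pow_apply]

lemma det_mul_gamma_pow (g : GL (Fin 2) ℚ_[p]) (m : ℕ) :
    GeneralLinearGroup.det (g * gamma p ^ m) = GeneralLinearGroup.det g * (pu p)⁻¹ ^ m := by
  have hgamma : GeneralLinearGroup.det (gamma p) = (pu p)⁻¹ := by
    ext
    simp [gamma, pu, GeneralLinearGroup.mkOfDetNeZero]
  rw [map_mul, map_pow, hgamma]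

lemma stabilization_mem_principalSeries (hv : v ∈ principalSeries μ μ') (x : ℂ) (m : ℕ) :
    stabilization x m v ∈ principalSeries μ μ' := by
  intro a b d g
  simp only [stabilization, mul_assoc, hv a b d]
  ring

namespace IsNormalizedSpherical

lemma inducingChar_eq_one (hv : IsNormalizedSpherical μ μ' v) {u u' : ℚ_[p]ˣ}
    (hu : ‖(u : ℚ_[p])‖ = 1) (hu' : ‖(u' : ℚ_[p])‖ = 1) : inducingChar μ μ' (u, u') = 1 := by
  have hK : inK p (upperTriangular u 0 u') := by
    refine ⟨fun i j ↦ ?_, ?_⟩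
    · fin_cases i <;> fin_cases j <;> simp [mat, coe_upperTriangular, hu, hu']
    · simp [mat, coe_upperTriangular, hu, hu']
  have hborel := hv.mem_principalSeries u 0 u' 1
  rwa [mul_one, hv.apply_one, mul_one, ← one_mul (upperTriangular u 0 u'),
    hv.apply_mul_of_inK _ _ hK, hv.apply_one, eq_comm] at hborel

lemma apply_upperTriangular_mul (hv : IsNormalizedSpherical μ μ' v) (a d : ℚ_[p]ˣ) (b : ℚ_[p])
    {k : GL (Fin 2) ℚ_[p]} (hk : inK p k) :
    v (upperTriangular a b d * k) = inducingChar μ μ' (a, d) := by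
  rw [hv.mem_principalSeries, ← one_mul k, hv.apply_mul_of_inK _ _ hk, hv.apply_one, mul_one]

lemma apply_of_norm_lower_left_le (hv : IsNormalizedSpherical μ μ' v) {d : ℚ_[p]ˣ}
    (hd : g 1 1 = d) (hle : ‖g 1 0‖ ≤ ‖g 1 1‖) :
    v g = inducingChar μ μ' (GeneralLinearGroup.det g / d, d) := by
  have hK : inK p (lowerUnipotent (g 1 0 / d)) := by
    have hquot : ‖g 1 0 / (d : ℚ_[p])‖ ≤ 1 := by
      rw [norm_div, ← hd]
      exact div_le_one_of_le₀ hle (norm_nonneg _)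
    refine ⟨fun i j ↦ ?_, by simp [mat, coe_lowerUnipotent]⟩
    fin_cases i <;> fin_cases j <;> simp [mat, coe_lowerUnipotent, -norm_div, hquot]
  conv_lhs => rw [eq_upperTriangular_mul_lowerUnipotent hd]
  exact hv.apply_upperTriangular_mul _ _ _ hK

lemma apply_of_norm_lower_right_le (hv : IsNormalizedSpherical μ μ' v) {c : ℚ_[p]ˣ}
    (hc : g 1 0 = c) (hle : ‖g 1 1‖ ≤ ‖g 1 0‖) :
    v g = inducingChar μ μ' (GeneralLinearGroup.det g / c, c) := by
  have hK : inK p (wEl p * upperTriangular 1 (g 1 1 / c) 1) := by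
    have hquot : ‖g 1 1 / (c : ℚ_[p])‖ ≤ 1 := by
      rw [norm_div, ← hc]
      exact div_le_one_of_le₀ hle (norm_nonneg _)
    have hcoe : mat p (wEl p * upperTriangular 1 (g 1 1 / c) 1) = !![0, 1; 1, g 1 1 / c] := by
      simp [mat, wEl, GeneralLinearGroup.mkOfDetNeZero, coe_upperTriangular]
    rw [inK, hcoe]
    refine ⟨fun i j ↦ ?_, by simp⟩
    fin_cases i <;> fin_cases j <;> simp [-norm_div, hquot]
  have hneg : inducingChar μ μ' (-1, 1) = 1 := hv.inducingChar_eq_one (by simp) (by simp)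
  conv_lhs => rw [eq_upperTriangular_mul_weyl_mul (w := wEl p) rfl hc]
  rw [hv.apply_upperTriangular_mul _ _ _ hK, ← one_mul (inducingChar μ μ' (_ / c, c)), ← hneg,
    ← map_mul, Prod.mk_mul_mk, one_mul, neg_one_mul, neg_div, neg_neg]

lemma apply_mul_gamma_pow_of_le (hv : IsNormalizedSpherical μ μ' v) {d : ℚ_[p]ˣ}
    (hd : g 1 1 = d) (hle : ‖g 1 0‖ * (p : ℝ) ^ m ≤ ‖g 1 1‖) :
    v (g * gamma p ^ m) =
      satakeAlpha μ μ' ^ m * inducingChar μ μ' (GeneralLinearGroup.det g / d, d) := by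
  rw [hv.apply_of_norm_lower_left_le (d := d) (by simp [mul_gamma_pow_apply, hd])
    (by simpa [mul_gamma_pow_apply] using hle), det_mul_gamma_pow, satakeAlpha, ← map_pow,
    ← map_mul, Prod.pow_mk, one_pow, Prod.mk_mul_mk, one_mul, mul_div_right_comm, mul_comm]

lemma apply_mul_gamma_pow_of_ge (hv : IsNormalizedSpherical μ μ' v) {c : ℚ_[p]ˣ}
    (hc : g 1 0 = c) (hle : ‖g 1 1‖ ≤ ‖g 1 0‖ * (p : ℝ) ^ m) :
    v (g * gamma p ^ m) =
      satakeBeta μ μ' ^ m * inducingChar μ μ' (GeneralLinearGroup.det g / c, c) := by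
  rw [hv.apply_of_norm_lower_right_le (c := c * (pu p)⁻¹ ^ m)
      (by simp [mul_gamma_pow_apply, hc, pu]) (by simpa [mul_gamma_pow_apply] using hle),
    det_mul_gamma_pow, satakeBeta, ← map_pow, ← map_mul, Prod.pow_mk, one_pow, Prod.mk_mul_mk,
    one_mul, mul_div_mul_right_eq_div, mul_comm c]

lemma stabilization_apply_of_le (hv : IsNormalizedSpherical μ μ' v) {d : ℚ_[p]ˣ}
    (hd : g 1 1 = d) (hle : ‖g 1 0‖ * (p : ℝ) ^ (m + 1) ≤ ‖g 1 1‖) :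
    stabilization x m v g = (satakeAlpha μ μ' - x) * satakeAlpha μ μ' ^ m *
      inducingChar μ μ' (GeneralLinearGroup.det g / d, d) := by
  have hle' : ‖g 1 0‖ * (p : ℝ) ^ m ≤ ‖g 1 1‖ := by
    refine le_trans ?_ hle
    gcongr
    · exact_mod_cast (Fact.out : p.Prime).one_le
    · exact m.le_succ
  rw [stabilization, hv.apply_mul_gamma_pow_of_le hd hle, hv.apply_mul_gamma_pow_of_le hd hle']
  ring

lemma stabilization_apply_of_ge (hv : IsNormalizedSpherical μ μ' v) {c : ℚ_[p]ˣ}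
    (hc : g 1 0 = c) (hle : ‖g 1 1‖ ≤ ‖g 1 0‖ * (p : ℝ) ^ m) :
    stabilization x m v g = (satakeBeta μ μ' - x) * satakeBeta μ μ' ^ m *
      inducingChar μ μ' (GeneralLinearGroup.det g / c, c) := by
  have hle' : ‖g 1 1‖ ≤ ‖g 1 0‖ * (p : ℝ) ^ (m + 1) := by
    refine hle.trans ?_
    gcongr
    · exact_mod_cast (Fact.out : p.Prime).one_le
    · exact m.le_succ
  rw [stabilization, hv.apply_mul_gamma_pow_of_ge hc hle, hv.apply_mul_gamma_pow_of_ge hc hle']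
  ring

lemma norm_mul_pow_le_norm_of_stabilization_satakeBeta_ne_zero (hv : IsNormalizedSpherical μ μ' v)
    (hne : stabilization (satakeBeta μ μ') m v g ≠ 0) : ‖g 1 0‖ * (p : ℝ) ^ (m + 1) ≤ ‖g 1 1‖ := by
  by_contra! hlt
  have hc : g 1 0 ≠ 0 := fun hc ↦ (norm_nonneg (g 1 1)).not_gt (by simpa [hc] using hlt)
  refine hne ?_
  rw [hv.stabilization_apply_of_ge (Units.val_mk0 hc).symm (norm_le_norm_mul_pow_of_lt hlt),
    sub_self, zero_mul, zero_mul]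

lemma norm_le_norm_of_stabilization_satakeAlpha_ne_zero (hv : IsNormalizedSpherical μ μ' v)
    (hne : stabilization (satakeAlpha μ μ') 0 v g ≠ 0) : ‖g 1 1‖ ≤ ‖g 1 0‖ := by
  by_contra! hlt
  have hd : g 1 1 ≠ 0 := norm_pos_iff.1 ((norm_nonneg _).trans_lt hlt)
  have hle : ‖g 1 0‖ * (p : ℝ) ^ (0 + 1) ≤ ‖g 1 1‖ := by
    by_contra! hgt
    exact hlt.not_ge (by simpa using norm_le_norm_mul_pow_of_lt hgt)
  refine hne ?_
  rw [hv.stabilization_apply_of_le (Units.val_mk0 hd).symm hle, sub_self, zero_mul, zero_mul]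

lemma stabilization_mul_stabilization_eq_zero (hv₁ : IsNormalizedSpherical μ₁ μ'₁ v₁)
    (hv₂ : IsNormalizedSpherical μ₂ μ'₂ v₂) (m : ℕ) (g : GL (Fin 2) ℚ_[p]) :
    stabilization (satakeBeta μ₁ μ'₁) m v₁ g * stabilization (satakeAlpha μ₂ μ'₂) 0 v₂ g = 0 := by
  by_contra hne
  have hcd := hv₁.norm_mul_pow_le_norm_of_stabilization_satakeBeta_ne_zero (left_ne_zero_of_mul hne)
  have hdc := hv₂.norm_le_norm_of_stabilization_satakeAlpha_ne_zero (right_ne_zero_of_mul hne)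
  have hpow : (1 : ℝ) < (p : ℝ) ^ (m + 1) :=
    one_lt_pow₀ (mod_cast (Fact.out : p.Prime).one_lt) m.succ_ne_zero
  have hc : g 1 0 = 0 := by
    by_contra hc
    exact (lt_mul_of_one_lt_right (norm_pos_iff.2 hc) hpow).not_ge (hcd.trans hdc)
  have hd : g 1 1 = 0 := norm_le_zero_iff.1 (by simpa [hc] using hdc)
  exact (ne_zero_or_ne_zero_of_row g 1).elim (· hc) (· hd)

lemma stabilization_apply_of_inJ (hv : IsNormalizedSpherical μ μ' v) {j : GL (Fin 2) ℚ_[p]}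
    (hj : inJ p (m + 1) j) :
    stabilization x m v j = (satakeAlpha μ μ' - x) * satakeAlpha μ μ' ^ m := by
  have hd : j 1 1 = (1 : ℚ_[p]ˣ) := hj.2.1
  have hle : ‖j 1 0‖ * (p : ℝ) ^ (m + 1) ≤ ‖j 1 1‖ := by
    rw [hd, Units.val_one, norm_one]
    exact norm_mul_pow_le_one_iff.2 hj.2.2.2
  rw [hv.stabilization_apply_of_le hd hle, div_one,
    hv.inducingChar_eq_one (norm_det_eq_one_of_inJ m.succ_ne_zero hj) (by simp), mul_one]

lemma stabilization_apply_weyl_mul_of_inJ (hv : IsNormalizedSpherical μ μ' v)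
    {n : ℕ} (hn : n ≠ 0) {j : GL (Fin 2) ℚ_[p]} (hj : inJ p n j) :
    stabilization x 0 v (wEl p * j) = satakeBeta μ μ' - x := by
  have hc : (wEl p * j) 1 0 = (1 : ℚ_[p]ˣ) := (weyl_mul_apply_one j 0).trans hj.1
  have hle : ‖(wEl p * j) 1 1‖ ≤ ‖(wEl p * j) 1 0‖ * (p : ℝ) ^ 0 := by
    rw [hc, weyl_mul_apply_one]
    simpa [mat] using hj.2.2.1
  have hdet : ‖((GeneralLinearGroup.det (wEl p * j) : ℚ_[p]ˣ) : ℚ_[p])‖ = 1 := by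
    rw [map_mul, Units.val_mul, norm_mul, norm_det_eq_one_of_inJ hn hj, mul_one]
    simp [wEl, GeneralLinearGroup.mkOfDetNeZero]
  rw [hv.stabilization_apply_of_ge hc hle, div_one, hv.inducingChar_eq_one hdet (by simp), pow_zero,
    mul_one, mul_one]

lemma stabilization_mul_stabilization_weyl (hv₁ : IsNormalizedSpherical μ₁ μ'₁ v₁)
    (hv₂ : IsNormalizedSpherical μ₂ μ'₂ v₂) {h : GL (Fin 2) ℚ_[p] → ℂ}
    (hhT : ∀ a d g, h (upperTriangular a 0 d * g) =
      (μ₁ a : ℂ) * μ'₁ d * μ'₂ a * μ₂ d * h g)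
    (hhJ : ∀ j, inJ p (m + 1) j → h j = 1)
    (hhsupp : ∀ g, (¬ ∃ t j, inT p t ∧ inJ p (m + 1) j ∧ g = t * j) → h g = 0)
    (g : GL (Fin 2) ℚ_[p]) :
    stabilization (satakeBeta μ₁ μ'₁) m v₁ g * stabilization (satakeAlpha μ₂ μ'₂) 0 v₂ (wEl p * g) =
      (satakeAlpha μ₁ μ'₁ - satakeBeta μ₁ μ'₁) * satakeAlpha μ₁ μ'₁ ^ m *
        (satakeBeta μ₂ μ'₂ - satakeAlpha μ₂ μ'₂) * h g := by
  by_cases hg : ∃ t j, inT p t ∧ inJ p (m + 1) j ∧ g = t * j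
  · obtain ⟨t, j, ht, hj, rfl⟩ := hg
    obtain ⟨a, d, rfl⟩ := exists_eq_upperTriangular_of_inT ht
    rw [hhT, hhJ j hj, ← mul_assoc, weyl_mul_upperTriangular rfl, mul_assoc,
      stabilization_mem_principalSeries hv₁.mem_principalSeries,
      stabilization_mem_principalSeries hv₂.mem_principalSeries,
      hv₁.stabilization_apply_of_inJ hj,
      hv₂.stabilization_apply_weyl_mul_of_inJ m.succ_ne_zero hj,
      ← inducingChar_mul_inducingChar_swap]
    ring
  · rw [hhsupp g hg, mul_zero]
    by_contra hne
    have hcd :=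
      hv₁.norm_mul_pow_le_norm_of_stabilization_satakeBeta_ne_zero (left_ne_zero_of_mul hne)
    have hba :=
      hv₂.norm_le_norm_of_stabilization_satakeAlpha_ne_zero (right_ne_zero_of_mul hne)
    rw [weyl_mul_apply_one, weyl_mul_apply_one] at hba
    exact hg (exists_inT_inJ_eq_mul hba hcd)

lemma eq_inv_mul_stabilization_mul_stabilization (hv₁ : IsNormalizedSpherical μ₁ μ'₁ v₁)
    (hv₂ : IsNormalizedSpherical μ₂ μ'₂ v₂) {C : ℂ} (hC : C ≠ 0)
    {H : GL (Fin 2) ℚ_[p] → GL (Fin 2) ℚ_[p] → ℂ}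
    (hH₁ : ∀ g₂, (H · g₂) ∈ principalSeries μ₁ μ'₁) (hH₂ : ∀ g₁, H g₁ ∈ principalSeries μ₂ μ'₂)
    (hdiag : ∀ g, H g g = 0)
    (hweyl : ∀ g, stabilization (satakeBeta μ₁ μ'₁) m v₁ g *
      stabilization (satakeAlpha μ₂ μ'₂) 0 v₂ (wEl p * g) = C * H g (wEl p * g))
    (g₁ g₂ : GL (Fin 2) ℚ_[p]) :
    H g₁ g₂ = C⁻¹ * (stabilization (satakeBeta μ₁ μ'₁) m v₁ g₁ *
      stabilization (satakeAlpha μ₂ μ'₂) 0 v₂ g₂) := by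
  have hf₁ : C⁻¹ • stabilization (satakeBeta μ₁ μ'₁) m v₁ ∈ principalSeries μ₁ μ'₁ :=
    Submodule.smul_mem _ _ (stabilization_mem_principalSeries hv₁.mem_principalSeries _ m)
  have hf₂ := stabilization_mem_principalSeries hv₂.mem_principalSeries (satakeAlpha μ₂ μ'₂) 0
  rw [← mul_assoc]
  refine eq_mul_of_mem_principalSeries hf₁ hf₂ hH₁ hH₂ (fun g ↦ ?_) (fun g ↦ ?_) g₁ g₂
  · rw [Pi.smul_apply, smul_eq_mul, mul_assoc, hv₁.stabilization_mul_stabilization_eq_zero hv₂,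
      mul_zero, hdiag]
  · rw [Pi.smul_apply, smul_eq_mul, mul_assoc, hweyl, inv_mul_cancel_left₀ hC]

end IsNormalizedSpherical

end Spherical

/-- Lemma «calcul-H» in the unramified case: `H = ext(h)` equals
`lam₁ lam₂ α₁^{-n} · (γ^n v₁ - β₁ γ^{n-1} v₁) ⊗ (v₂ - α₂⁻¹ γ v₂)`,
where `v₁, v₂` are the normalized spherical vectors of the unramified
principal series `Ind_B^G (μᵢ ⊗ μ'ᵢ)`. -/
theorem stmt12 (n : ℕ) (hn : 1 ≤ n)
    (μ₁ μ'₁ μ₂ μ'₂ : ℚ_[p]ˣ →* ℂˣ)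
    (hμ₁ : Unramified p μ₁) (hμ'₁ : Unramified p μ'₁)
    (hμ₂ : Unramified p μ₂) (hμ'₂ : Unramified p μ'₂)
    (α₁ β₁ α₂ β₂ lam₁ lam₂ : ℂ)
    (hα₁ : α₁ = ((μ₁ (pu p) : ℂ))⁻¹ * (Real.sqrt p : ℂ))
    (hβ₁ : β₁ = ((μ'₁ (pu p) : ℂ))⁻¹ / (Real.sqrt p : ℂ))
    (hα₂ : α₂ = ((μ₂ (pu p) : ℂ))⁻¹ * (Real.sqrt p : ℂ))
    (hβ₂ : β₂ = ((μ'₂ (pu p) : ℂ))⁻¹ / (Real.sqrt p : ℂ))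
    (hne₁ : α₁ ≠ β₁) (hne₂ : α₂ ≠ β₂)
    (hlam₁ : lam₁ = (1 - β₁ / α₁)⁻¹) (hlam₂ : lam₂ = (1 - β₂ / α₂)⁻¹)
    (v₁ v₂ : GL (Fin 2) ℚ_[p] → ℂ)
    (hv₁B : ∀ (b g : GL (Fin 2) ℚ_[p]) (a d : ℚ_[p]ˣ),
      mat p b 1 0 = 0 → mat p b 0 0 = a → mat p b 1 1 = d →
      v₁ (b * g) = (μ₁ a : ℂ) * (μ'₁ d : ℂ) *
        (Real.sqrt ‖(a : ℚ_[p]) / (d : ℚ_[p])‖ : ℂ) * v₁ g)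
    (hv₁K : ∀ (g k : GL (Fin 2) ℚ_[p]), inK p k → v₁ (g * k) = v₁ g)
    (hv₁1 : v₁ 1 = 1)
    (hv₂B : ∀ (b g : GL (Fin 2) ℚ_[p]) (a d : ℚ_[p]ˣ),
      mat p b 1 0 = 0 → mat p b 0 0 = a → mat p b 1 1 = d →
      v₂ (b * g) = (μ₂ a : ℂ) * (μ'₂ d : ℂ) *
        (Real.sqrt ‖(a : ℚ_[p]) / (d : ℚ_[p])‖ : ℂ) * v₂ g)
    (hv₂K : ∀ (g k : GL (Fin 2) ℚ_[p]), inK p k → v₂ (g * k) = v₂ g)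
    (hv₂1 : v₂ 1 = 1)
    (h : GL (Fin 2) ℚ_[p] → ℂ)
    (hhT : ∀ (t g : GL (Fin 2) ℚ_[p]) (a d : ℚ_[p]ˣ),
      inT p t → mat p t 0 0 = a → mat p t 1 1 = d →
      h (t * g) = (μ₁ a : ℂ) * (μ'₁ d : ℂ) * (μ'₂ a : ℂ) * (μ₂ d : ℂ) * h g)
    (hhJ : ∀ j : GL (Fin 2) ℚ_[p], inJ p n j → h j = 1)
    (hhsupp : ∀ g : GL (Fin 2) ℚ_[p],
      (¬ ∃ t j : GL (Fin 2) ℚ_[p], inT p t ∧ inJ p n j ∧ g = t * j) → h g = 0)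
    (H : GL (Fin 2) ℚ_[p] → GL (Fin 2) ℚ_[p] → ℂ)
    (hHB : ∀ (b₁ b₂ g₁ g₂ : GL (Fin 2) ℚ_[p]) (a₁ d₁ a₂ d₂ : ℚ_[p]ˣ),
      mat p b₁ 1 0 = 0 → mat p b₁ 0 0 = a₁ → mat p b₁ 1 1 = d₁ →
      mat p b₂ 1 0 = 0 → mat p b₂ 0 0 = a₂ → mat p b₂ 1 1 = d₂ →
      H (b₁ * g₁) (b₂ * g₂) =
        (μ₁ a₁ : ℂ) * (μ'₁ d₁ : ℂ) * (μ₂ a₂ : ℂ) * (μ'₂ d₂ : ℂ) *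
          (Real.sqrt ‖((a₁ : ℚ_[p]) * (a₂ : ℚ_[p])) /
            ((d₁ : ℚ_[p]) * (d₂ : ℚ_[p]))‖ : ℂ) * H g₁ g₂)
    (hHdiag : ∀ g : GL (Fin 2) ℚ_[p], H g g = 0)
    (hHw : ∀ g : GL (Fin 2) ℚ_[p], H g (wEl p * g) = h g) :
    ∀ g₁ g₂ : GL (Fin 2) ℚ_[p],
      H g₁ g₂ = lam₁ * lam₂ * α₁ ^ (-(n : ℤ)) *
        (v₁ (g₁ * gamma p ^ n) - β₁ * v₁ (g₁ * gamma p ^ (n - 1))) *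
        (v₂ g₂ - α₂⁻¹ * v₂ (g₂ * gamma p)) := by
  intro g₁ g₂
  obtain ⟨m, rfl⟩ := Nat.exists_eq_add_of_le' hn
  obtain rfl : α₁ = satakeAlpha μ₁ μ'₁ := hα₁.trans satakeAlpha_eq.symm
  obtain rfl : β₁ = satakeBeta μ₁ μ'₁ := hβ₁.trans satakeBeta_eq.symm
  obtain rfl : α₂ = satakeAlpha μ₂ μ'₂ := hα₂.trans satakeAlpha_eq.symm
  obtain rfl : β₂ = satakeBeta μ₂ μ'₂ := hβ₂.trans satakeBeta_eq.symm
  have hv₁ : IsNormalizedSpherical μ₁ μ'₁ v₁ := ⟨fun a _ d g ↦ hv₁B _ g a d rfl rfl rfl, hv₁K, hv₁1⟩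
  have hv₂ : IsNormalizedSpherical μ₂ μ'₂ v₂ := ⟨fun a _ d g ↦ hv₂B _ g a d rfl rfl rfl, hv₂K, hv₂1⟩
  have hH₁ (g₂) : (H · g₂) ∈ principalSeries μ₁ μ'₁ := fun a b d g ↦ by
    simpa [inducingChar] using hHB (upperTriangular a b d) 1 g g₂ a d 1 1 rfl rfl rfl rfl rfl rfl
  have hH₂ (g₁) : H g₁ ∈ principalSeries μ₂ μ'₂ := fun a b d g ↦ by
    simpa [inducingChar] using hHB 1 (upperTriangular a b d) g₁ g 1 1 a d rfl rfl rfl rfl rfl rfl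
  have hweyl := hv₁.stabilization_mul_stabilization_weyl hv₂
    (fun a d g ↦ hhT _ g a d ⟨rfl, rfl⟩ rfl rfl) hhJ hhsupp
  simp only [← hHw] at hweyl
  have hα₁ := satakeAlpha_ne_zero μ₁ μ'₁
  have hα₂ := satakeAlpha_ne_zero μ₂ μ'₂
  have hC := mul_ne_zero (mul_ne_zero (sub_ne_zero.2 hne₁) (pow_ne_zero m hα₁))
    (sub_ne_zero.2 hne₂.symm)
  rw [hv₁.eq_inv_mul_stabilization_mul_stabilization hv₂ hC hH₁ hH₂ hHdiag hweyl,
    inv_sub_mul_pow_mul_sub hα₁ hα₂, ← hlam₁, ← hlam₂, stabilization, stabilization, zero_add,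
    pow_one, pow_zero, mul_one, Nat.add_sub_cancel]
  field_simp
  ring
end
end

section
/- Let V be a smooth representation of G on a complex vector space, let Lambda : T -> C^* be a group homomorphism with Lambda(diag(u,1)) = 1 for all u in Z_p^*, and let phi : V -> C be a nonzero linear form such that phi(t·v) = Lambda(t) * phi(v) for all t in T and all v in V. Then there exists an integer s_0 >= 1 such that for every s >= s_0 there is a vector v in V with phi(v) ≠ 0 and k·v = Lambda(diag(1,d)) · v for every k in I_s with (2,2) entry d. -/
/-!
If `K(r)` fixes `v₀`, translating `v₀` by `diag(p⁻ʳ, 1)` yields a vector `v₁` fixed by the conjugate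
of `K(r)`: the matrices with diagonal entries in `1 + pʳℤ_p`, upper right entry in `ℤ_p` and lower
left entry in `p²ʳℤ_p`. The compact torus `T ∩ K` normalizes this group and acts on `v₁` through a
finite quotient, so the sum of its translates twisted by `Λ⁻¹` is an eigenvector. As `φ` is
`Λ`-equivariant, its value on this sum is `φ v₁` times the order of the quotient, a divisor of
`(pʳ⁻¹(p - 1))²`. For `s ≥ 2r`, every element of `I_s` is the product of its diagonal part and an
element of the conjugated group.
-/

open Matrix

noncomputable section

variable (p : ℕ) [Fact p.Prime]

/-- Membership in the principal congruence subgroup `K(s)` of `K`: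
matrices congruent to the identity modulo `p^s`. -/
def inKs (s : ℕ) (g : GL (Fin 2) ℚ_[p]) : Prop :=
  inK p g ∧ ∀ i j, ‖mat p g i j - (1 : Matrix (Fin 2) (Fin 2) ℚ_[p]) i j‖ ≤
    (p : ℝ) ^ (-(s : ℤ))

/-- The diagonal element `diag(a, d)` of `GL₂(ℚ_p)`, for units `a, d`. -/
def diagGL (a d : ℚ_[p]ˣ) : GL (Fin 2) ℚ_[p] :=
  Matrix.GeneralLinearGroup.mkOfDetNeZero !![(a : ℚ_[p]), 0; 0, (d : ℚ_[p])] (by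
    have : (a : ℚ_[p]) * (d : ℚ_[p]) ≠ 0 :=
      mul_ne_zero (Units.ne_zero a) (Units.ne_zero d)
    simp [Matrix.det_fin_two_of, this])

section Equivariant

variable {F V : Type*} [CommRing F] [AddCommGroup V] [Module F V]

theorem map_conj_fixed {G : Type*} [Group G] (ρ : G →* Module.End F V) {g k : G} {v : V}
    (h : ρ (g⁻¹ * k * g) v = v) : ρ k (ρ g v) = ρ g v := by
  calc ρ k (ρ g v) = ρ (g * (g⁻¹ * k * g)) v := by
        rw [← Module.End.mul_apply, ← map_mul]; group
    _ = ρ g v := by rw [map_mul, Module.End.mul_apply, h]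

variable [IsDomain F] {A : Type*}

theorem eigenvalue_mul [Monoid A] {σ : A →* Module.End F V} {χ : A → Fˣ} {φ : V →ₗ[F] F}
    (hφ : ∀ a v, φ (σ a v) = χ a * φ v) {v : V} (hv : φ v ≠ 0) (a b : A) :
    χ (a * b) = χ a * χ b := by
  refine Units.ext (mul_right_cancel₀ hv ?_)
  rw [← hφ, map_mul, Module.End.mul_apply, hφ, hφ, Units.val_mul, mul_assoc]

theorem eigenvalue_eq_one [Monoid A] {σ : A →* Module.End F V} {χ : A → Fˣ} {φ : V →ₗ[F] F}
    (hφ : ∀ a v, φ (σ a v) = χ a * φ v) {v : V} (hv : φ v ≠ 0) {a : A} (ha : σ a v = v) :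
    χ a = 1 :=
  Units.ext ((mul_eq_right₀ hv).1 (by rw [← hφ, ha]))

theorem exists_eigenvector_mem_span_orbit [Group A] {σ : A →* Module.End F V} {χ : A → Fˣ}
    {φ : V →ₗ[F] F} (hφ : ∀ a v, φ (σ a v) = χ a * φ v) {v : V} (hv : φ v ≠ 0) {U : Subgroup A}
    (hindex : (U.index : F) ≠ 0) (hU : ∀ u ∈ U, σ u v = v) :
    ∃ w ∈ Submodule.span F (Set.range fun a => σ a v), φ w ≠ 0 ∧ ∀ a, σ a w = χ a • w := by
  have : U.FiniteIndex := ⟨fun h => hindex (by rw [h, Nat.cast_zero])⟩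
  have := Fintype.ofFinite (A ⧸ U)
  have hχ := eigenvalue_mul hφ hv
  let f : A ⧸ U → V := Quotient.lift (fun a => (χ a)⁻¹ • σ a v) fun a b hab => by
    obtain ⟨u, hu, rfl⟩ : ∃ u ∈ U, a * u = b :=
      ⟨a⁻¹ * b, QuotientGroup.leftRel_apply.1 hab, mul_inv_cancel_left a b⟩
    rw [hχ, eigenvalue_eq_one hφ hv (hU u hu), mul_one, map_mul, Module.End.mul_apply, hU u hu]
  have hf_apply (a : A) : f a = (χ a)⁻¹ • σ a v := rfl
  have hf_form (q : A ⧸ U) : φ (f q) = φ v := by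
    induction q using QuotientGroup.induction_on with
    | H a => rw [hf_apply, Units.smul_def, map_smul, hφ, smul_eq_mul, Units.inv_mul_cancel_left]
  have hf_smul (a : A) (q : A ⧸ U) : σ a (f q) = χ a • f (a • q) := by
    induction q using QuotientGroup.induction_on with
    | H b =>
      rw [MulAction.Quotient.smul_coe, hf_apply, hf_apply, smul_eq_mul, hχ, map_mul, mul_inv,
        smul_smul, mul_inv_cancel_left, Units.smul_def, map_smul, Module.End.mul_apply,
        Units.smul_def]
  refine ⟨∑ q, f q, Submodule.sum_mem _ fun q _ => ?_, ?_, fun a => ?_⟩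
  · induction q using QuotientGroup.induction_on with
    | H a => exact Submodule.smul_mem _ _ (Submodule.subset_span ⟨a, rfl⟩)
  · simp only [map_sum, hf_form, Finset.sum_const, nsmul_eq_mul, Finset.card_univ]
    rw [← Nat.card_eq_fintype_card]
    exact mul_ne_zero hindex hv
  · simp only [map_sum, hf_smul, ← Finset.smul_sum]
    exact congrArg (χ a • ·) (Equiv.sum_comp (MulAction.toPerm a) f)

end Equivariant

section Padic

variable {p}

theorem padic_norm_eq_one_of_norm_sub_one_lt {x : ℚ_[p]} (h : ‖x - 1‖ < 1) : ‖x‖ = 1 :=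
  (Padic.norm_eq_of_norm_sub_lt_right (by rwa [norm_one])).trans norm_one

theorem prime_zpow_neg_lt_one {r : ℕ} (hr : 1 ≤ r) : (p : ℝ) ^ (-(r : ℤ)) < 1 :=
  zpow_lt_one_of_neg₀ (mod_cast (Fact.out : p.Prime).one_lt) (by lia)

theorem norm_pu_pow_inv (r : ℕ) :
    ‖(((pu p ^ r)⁻¹ : ℚ_[p]ˣ) : ℚ_[p])‖ = ((p : ℝ) ^ (-(r : ℤ)))⁻¹ := by
  simp [pu]

variable (p) in
/-- The group `1 + pʳℤ_p` of principal units of level `r` (all of `ℤ_pˣ` when `r = 0`). -/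
def principalUnits (r : ℕ) : Subgroup ℤ_[p]ˣ :=
  (Units.map (PadicInt.toZModPow (p := p) r : ℤ_[p] →* ZMod (p ^ r))).ker

theorem norm_sub_one_le_of_mem_principalUnits {r : ℕ} {u : ℤ_[p]ˣ} (hu : u ∈ principalUnits p r) :
    ‖((u : ℤ_[p]) : ℚ_[p]) - 1‖ ≤ (p : ℝ) ^ (-(r : ℤ)) := by
  have hu : PadicInt.toZModPow r (u : ℤ_[p]) = 1 := congrArg Units.val hu
  have hker : (u : ℤ_[p]) - 1 ∈ RingHom.ker (PadicInt.toZModPow (p := p) r) := by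
    rw [RingHom.mem_ker, map_sub, hu, map_one, sub_self]
  rwa [PadicInt.ker_toZModPow, ← PadicInt.norm_le_pow_iff_mem_span_pow] at hker

theorem index_principalUnits_dvd (r : ℕ) : (principalUnits p r).index ∣ (p ^ r).totient := by
  have : NeZero (p ^ r) := ⟨pow_ne_zero _ (Fact.out : p.Prime).ne_zero⟩
  rw [principalUnits, Subgroup.index_ker, ← ZMod.card_units_eq_totient,
    ← Nat.card_eq_fintype_card]
  exact Subgroup.card_subgroup_dvd_card _

theorem index_principalUnits_ne_zero {F : Type*} [CommRing F] [IsDomain F] (hp₀ : (p : F) ≠ 0)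
    (hp₁ : (p : F) ≠ 1) (r : ℕ) : ((principalUnits p r).index : F) ≠ 0 := by
  refine ne_zero_of_dvd_ne_zero ?_ (Nat.cast_dvd_cast (index_principalUnits_dvd r))
  have hp : p.Prime := Fact.out
  rcases r.eq_zero_or_pos with rfl | hr
  · simp
  · rw [Nat.totient_prime_pow hp hr, Nat.cast_mul, Nat.cast_pow, Nat.cast_pred hp.pos]
    exact mul_ne_zero (pow_ne_zero _ hp₀) (sub_ne_zero.2 hp₁)

end Padic

section Box

variable {p}

theorem mat_diagGL (a d : ℚ_[p]ˣ) :
    mat p (diagGL p a d) = !![(a : ℚ_[p]), 0; 0, (d : ℚ_[p])] := rfl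

theorem mat_mul (g h : GL (Fin 2) ℚ_[p]) : mat p (g * h) = mat p g * mat p h := rfl

theorem inT_diagGL (a d : ℚ_[p]ˣ) : inT p (diagGL p a d) := ⟨rfl, rfl⟩

variable (p) in
/-- The parametrization `(a, d) ↦ diag(a, d)` of the diagonal torus, as a group homomorphism. -/
def torusHom : ℚ_[p]ˣ × ℚ_[p]ˣ →* GL (Fin 2) ℚ_[p] :=
  MonoidHom.mk' (fun x => diagGL p x.1 x.2) fun x y => Units.ext <| by
    change mat p (diagGL p _ _) = mat p (diagGL p _ _) * mat p (diagGL p _ _)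
    simp [mat_diagGL]

theorem diagGL_inv (a d : ℚ_[p]ˣ) : (diagGL p a d)⁻¹ = diagGL p a⁻¹ d⁻¹ :=
  (map_inv (torusHom p) (a, d)).symm

/-- The matrices `[[a, b], [c, d]]` with `a` and `d` within `δ` of `1`, `‖b‖ ≤ β` and `‖c‖ ≤ γ`.
Both `K(r)` and its conjugates by diagonal matrices are of this form. -/
structure InBox (δ β γ : ℝ) (g : GL (Fin 2) ℚ_[p]) : Prop where
  upperLeft : ‖mat p g 0 0 - 1‖ ≤ δ
  upperRight : ‖mat p g 0 1‖ ≤ β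
  lowerLeft : ‖mat p g 1 0‖ ≤ γ
  lowerRight : ‖mat p g 1 1 - 1‖ ≤ δ

namespace InBox

variable {δ δ' β β' γ γ' : ℝ} {g : GL (Fin 2) ℚ_[p]}

theorem mono (hδ : δ ≤ δ') (hβ : β ≤ β') (hγ : γ ≤ γ') (h : InBox δ β γ g) : InBox δ' β' γ' g :=
  ⟨h.1.trans hδ, h.2.trans hβ, h.3.trans hγ, h.4.trans hδ⟩

theorem conj_diagGL (h : InBox δ β γ g) (a d : ℚ_[p]ˣ) :
    InBox δ (‖(a : ℚ_[p])‖⁻¹ * β * ‖(d : ℚ_[p])‖) (‖(d : ℚ_[p])‖⁻¹ * γ * ‖(a : ℚ_[p])‖)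
      ((diagGL p a d)⁻¹ * g * diagGL p a d) := by
  obtain ⟨h₀₀, h₀₁, h₁₀, h₁₁⟩ := h
  have hentries : mat p ((diagGL p a d)⁻¹ * g * diagGL p a d) =
      !![mat p g 0 0, (a : ℚ_[p])⁻¹ * mat p g 0 1 * d;
        (d : ℚ_[p])⁻¹ * mat p g 1 0 * a, mat p g 1 1] := by
    rw [diagGL_inv, mat_mul, mat_mul, mat_diagGL, mat_diagGL, Matrix.eta_fin_two (mat p g)]
    simp [mul_right_comm _ _ (a : ℚ_[p]), mul_right_comm _ _ (d : ℚ_[p])]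
  constructor <;> rw [hentries]
  · exact h₀₀
  · change ‖(a : ℚ_[p])⁻¹ * mat p g 0 1 * d‖ ≤ _
    rw [norm_mul, norm_mul, norm_inv]
    gcongr
  · change ‖(d : ℚ_[p])⁻¹ * mat p g 1 0 * a‖ ≤ _
    rw [norm_mul, norm_mul, norm_inv]
    gcongr
  · exact h₁₁

theorem norm_det_eq_one (h : InBox δ β γ g) (hδ : δ < 1) (hβγ : β * γ < 1) :
    ‖(mat p g).det‖ = 1 := by
  have hdiag : ‖mat p g 0 0 * mat p g 1 1‖ = 1 := by
    rw [norm_mul, padic_norm_eq_one_of_norm_sub_one_lt (h.upperLeft.trans_lt hδ),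
      padic_norm_eq_one_of_norm_sub_one_lt (h.lowerRight.trans_lt hδ), one_mul]
  have hoff : ‖mat p g 0 1 * mat p g 1 0‖ < 1 := by
    rw [norm_mul]
    exact (mul_le_mul h.upperRight h.lowerLeft (norm_nonneg _)
      ((norm_nonneg _).trans h.upperRight)).trans_lt hβγ
  rw [← hdiag, Matrix.det_fin_two]
  refine (Padic.norm_eq_of_norm_sub_lt_left ?_).symm
  rwa [sub_sub_cancel, hdiag]

theorem to_inKs {r : ℕ} (hr : 1 ≤ r)
    (h : InBox ((p : ℝ) ^ (-(r : ℤ))) ((p : ℝ) ^ (-(r : ℤ))) ((p : ℝ) ^ (-(r : ℤ))) g) :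
    inKs p r g := by
  have hlt := prime_zpow_neg_lt_one (p := p) hr
  have hnonneg : 0 ≤ (p : ℝ) ^ (-(r : ℤ)) := by positivity
  refine ⟨⟨fun i j => ?_, h.norm_det_eq_one hlt (mul_lt_one_of_nonneg_of_lt_one_left hnonneg hlt
    hlt.le)⟩, fun i j => ?_⟩
  · fin_cases i <;> fin_cases j
    · exact (padic_norm_eq_one_of_norm_sub_one_lt (h.upperLeft.trans_lt hlt)).le
    · exact h.upperRight.trans hlt.le
    · exact h.lowerLeft.trans hlt.le
    · exact (padic_norm_eq_one_of_norm_sub_one_lt (h.lowerRight.trans_lt hlt)).le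
  · fin_cases i <;> fin_cases j
    · exact h.upperLeft
    · simpa using h.upperRight
    · simpa using h.lowerLeft
    · exact h.lowerRight

end InBox

namespace inI

theorem norm_diag_eq_one {s : ℕ} (hs : 1 ≤ s) {k : GL (Fin 2) ℚ_[p]} (hk : inI p s k) :
    ‖mat p k 0 0‖ = 1 ∧ ‖mat p k 1 1‖ = 1 :=
  have h := hk.2.resolve_left (by lia)
  ⟨h.1, h.2.1⟩

theorem diagGL_inv_mul_inBox {s : ℕ} (hs : 1 ≤ s) {k : GL (Fin 2) ℚ_[p]} (hk : inI p s k)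
    {a d : ℚ_[p]ˣ} (ha : mat p k 0 0 = a) (hd : mat p k 1 1 = d) :
    InBox 0 1 ((p : ℝ) ^ (-(s : ℤ))) ((diagGL p a d)⁻¹ * k) := by
  obtain ⟨hnorm_a, hnorm_d⟩ := hk.norm_diag_eq_one hs
  rw [ha] at hnorm_a
  rw [hd] at hnorm_d
  have hentries : mat p ((diagGL p a d)⁻¹ * k) =
      !![1, (a : ℚ_[p])⁻¹ * mat p k 0 1; (d : ℚ_[p])⁻¹ * mat p k 1 0, 1] := by
    rw [diagGL_inv, mat_mul, mat_diagGL, Matrix.eta_fin_two (mat p k), ha, hd]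
    simp
  constructor <;> rw [hentries]
  · simp
  · simpa [hnorm_a] using hk.1.1 0 1
  · simpa [hnorm_d] using (hk.2.resolve_left (by lia)).2.2
  · simp

end inI

end Box

section Representation

variable {p} {F V : Type*} [CommRing F] [AddCommGroup V] [Module F V]
  {ρ : GL (Fin 2) ℚ_[p] →* Module.End F V}

theorem fixed_translate_of_fixed_inKs {r : ℕ} (hr : 1 ≤ r) {v : V}
    (hv : ∀ k, inKs p r k → ρ k v = v) {k : GL (Fin 2) ℚ_[p]}
    (hk : InBox ((p : ℝ) ^ (-(r : ℤ))) 1 ((p : ℝ) ^ (-((2 * r : ℕ) : ℤ))) k) :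
    ρ k (ρ (diagGL p (pu p ^ r)⁻¹ 1) v) = ρ (diagGL p (pu p ^ r)⁻¹ 1) v := by
  refine map_conj_fixed ρ (hv _ (InBox.to_inKs hr ((hk.conj_diagGL _ 1).mono le_rfl ?_ ?_)))
  · simp only [norm_pu_pow_inv, inv_inv, Units.val_one, norm_one, mul_one, le_refl]
  · have hp : (p : ℝ) ≠ 0 := mod_cast (Fact.out : p.Prime).ne_zero
    rw [norm_pu_pow_inv, Units.val_one, norm_one, inv_one, one_mul, ← _root_.zpow_neg,
      ← zpow_add₀ hp]
    exact le_of_eq (by congr 1; push_cast; ring)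

variable [IsDomain F] {Λ : GL (Fin 2) ℚ_[p] → Fˣ} {φ : V →ₗ[F] F}

theorem exists_fixed_eigenvector_torus (hp₀ : (p : F) ≠ 0) (hp₁ : (p : F) ≠ 1)
    (hequiv : ∀ t v, inT p t → φ (ρ t v) = Λ t * φ v) {r : ℕ} {β γ : ℝ} (hβ : 0 ≤ β) (hγ : 0 ≤ γ)
    {v : V} (hv : φ v ≠ 0) (hfix : ∀ k, InBox ((p : ℝ) ^ (-(r : ℤ))) β γ k → ρ k v = v) :
    ∃ w, φ w ≠ 0 ∧ (∀ k, InBox ((p : ℝ) ^ (-(r : ℤ))) β γ k → ρ k w = w) ∧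
      ∀ a d : ℚ_[p]ˣ, ‖(a : ℚ_[p])‖ = 1 → ‖(d : ℚ_[p])‖ = 1 →
        ρ (diagGL p a d) w = Λ (diagGL p a d) • w := by
  let incl : ℤ_[p]ˣ →* ℚ_[p]ˣ := Units.map (algebraMap ℤ_[p] ℚ_[p])
  let ι : ℤ_[p]ˣ × ℤ_[p]ˣ →* GL (Fin 2) ℚ_[p] := (torusHom p).comp (incl.prodMap incl)
  have hnorm (u : ℤ_[p]ˣ) : ‖(incl u : ℚ_[p])‖ = 1 := PadicInt.norm_units u
  have hU : ∀ u ∈ (principalUnits p r).prod (principalUnits p r), ρ (ι u) v = v := fun u hu =>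
    hfix _ ⟨norm_sub_one_le_of_mem_principalUnits hu.1, norm_zero.trans_le hβ,
      norm_zero.trans_le hγ, norm_sub_one_le_of_mem_principalUnits hu.2⟩
  have hindex : (((principalUnits p r).prod (principalUnits p r)).index : F) ≠ 0 := by
    rw [Subgroup.index_prod, Nat.cast_mul]
    exact mul_self_ne_zero.2 (index_principalUnits_ne_zero hp₀ hp₁ r)
  obtain ⟨w, hw_span, hw, hw_eigen⟩ := exists_eigenvector_mem_span_orbit (σ := ρ.comp ι)
    (χ := fun x => Λ (ι x)) (fun x v => hequiv _ v (inT_diagGL _ _)) hv hindex hU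
  refine ⟨w, hw, fun k hk => ?_, fun a d ha hd => ?_⟩
  · suffices Set.EqOn (ρ k) LinearMap.id (Set.range fun x => ρ (ι x) v) from
      LinearMap.eqOn_span this hw_span
    rintro _ ⟨x, rfl⟩
    have hconj := hk.conj_diagGL (incl x.1) (incl x.2)
    simp only [hnorm, inv_one, one_mul, mul_one] at hconj
    exact map_conj_fixed ρ (hfix _ hconj)
  · obtain ⟨a, rfl⟩ : ∃ u, incl u = a := ⟨PadicInt.mkUnits ha, Units.ext rfl⟩
    obtain ⟨d, rfl⟩ : ∃ u, incl u = d := ⟨PadicInt.mkUnits hd, Units.ext rfl⟩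
    exact hw_eigen (a, d)

theorem exists_eigenvector_inI (hp₀ : (p : F) ≠ 0) (hp₁ : (p : F) ≠ 1)
    (hequiv : ∀ t v, inT p t → φ (ρ t v) = Λ t * φ v) {r : ℕ} (hr : 1 ≤ r) {v₀ : V}
    (hv₀ : φ v₀ ≠ 0) (hfix : ∀ k, inKs p r k → ρ k v₀ = v₀) {s : ℕ} (hs : 2 * r ≤ s) :
    ∃ v, φ v ≠ 0 ∧ ∀ (k : GL (Fin 2) ℚ_[p]) (a d : ℚ_[p]ˣ), inI p s k → mat p k 0 0 = a →
      mat p k 1 1 = d → ρ k v = Λ (diagGL p a d) • v := by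
  have hv₁ : φ (ρ (diagGL p (pu p ^ r)⁻¹ 1) v₀) ≠ 0 := by
    rw [hequiv _ _ (inT_diagGL _ _)]
    exact mul_ne_zero (Units.ne_zero _) hv₀
  obtain ⟨w, hw, hw_fix, hw_eigen⟩ := exists_fixed_eigenvector_torus hp₀ hp₁ hequiv zero_le_one
    (by positivity) hv₁ fun k => fixed_translate_of_fixed_inKs hr hfix
  refine ⟨w, hw, fun k a d hk ha hd => ?_⟩
  obtain ⟨hnorm_a, hnorm_d⟩ := hk.norm_diag_eq_one (by lia)
  have hlevel : (p : ℝ) ^ (-(s : ℤ)) ≤ (p : ℝ) ^ (-((2 * r : ℕ) : ℤ)) :=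
    zpow_le_zpow_right₀ (mod_cast (Fact.out : p.Prime).one_lt.le) (by lia)
  have hfactor : ρ ((diagGL p a d)⁻¹ * k) w = w :=
    hw_fix _ ((hk.diagGL_inv_mul_inBox (by lia) ha hd).mono (by positivity) le_rfl
      hlevel)
  calc ρ k w = ρ (diagGL p a d) (ρ ((diagGL p a d)⁻¹ * k) w) := by
        rw [← Module.End.mul_apply, ← map_mul, mul_inv_cancel_left]
    _ = Λ (diagGL p a d) • w := by rw [hfactor, hw_eigen a d (ha ▸ hnorm_a) (hd ▸ hnorm_d)]

theorem eigenvalue_diagGL_eq (hequiv : ∀ t v, inT p t → φ (ρ t v) = Λ t * φ v) {v : V}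
    (hv : φ v ≠ 0) {a : ℚ_[p]ˣ} (ha : Λ (diagGL p a 1) = 1) (d : ℚ_[p]ˣ) :
    Λ (diagGL p a d) = Λ (diagGL p 1 d) := by
  have hmul : Λ (diagGL p (a * 1) (1 * d)) = Λ (diagGL p a 1) * Λ (diagGL p 1 d) :=
    eigenvalue_mul (σ := ρ.comp (torusHom p)) (χ := fun x => Λ (torusHom p x))
      (fun x v => hequiv _ v (inT_diagGL _ _)) hv (a, 1) (1, d)
  rwa [mul_one, one_mul, ha, one_mul] at hmul

end Representation

theorem stmt15_general {F V : Type*} [CommRing F] [IsDomain F] (hp₀ : (p : F) ≠ 0)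
    (hp₁ : (p : F) ≠ 1) [AddCommGroup V] [Module F V] (ρ : GL (Fin 2) ℚ_[p] →* (V →ₗ[F] V))
    (Λ : GL (Fin 2) ℚ_[p] → Fˣ)
    (hΛunr : ∀ u : ℚ_[p]ˣ, ‖(u : ℚ_[p])‖ = 1 → Λ (diagGL p u 1) = 1) (φ : V →ₗ[F] F)
    (hequiv : ∀ (t : GL (Fin 2) ℚ_[p]) (v : V), inT p t → φ (ρ t v) = (Λ t : F) * φ v)
    {v₀ : V} (hv₀ : φ v₀ ≠ 0) {r : ℕ} (hr : 1 ≤ r) (hfix : ∀ k, inKs p r k → ρ k v₀ = v₀)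
    {s : ℕ} (hs : 2 * r ≤ s) :
    ∃ v : V, φ v ≠ 0 ∧ ∀ (k : GL (Fin 2) ℚ_[p]) (d : ℚ_[p]ˣ), inI p s k → mat p k 1 1 = d →
      ρ k v = (Λ (diagGL p 1 d) : F) • v := by
  obtain ⟨v, hv, hv_eigen⟩ := exists_eigenvector_inI hp₀ hp₁ hequiv hr hv₀ hfix hs
  refine ⟨v, hv, fun k d hk hd => ?_⟩
  have hnorm := (hk.norm_diag_eq_one (by lia)).1
  let a : ℚ_[p]ˣ := Units.mk0 (mat p k 0 0) (norm_ne_zero_iff.1 (hnorm.trans_ne one_ne_zero))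
  rw [hv_eigen k a d hk rfl hd, eigenvalue_diagGL_eq hequiv hv₀ (hΛunr a hnorm), Units.smul_def]

/-- Lemma «lemmeV3» (in the form used in its proof): if `V` is a smooth
representation of `G`, `Λ` is a character of the diagonal torus `T` which is
trivial on `diag(ℤ_p^×, 1)`, and `φ` is a nonzero linear form on `V` that is
`(T, Λ)`-equivariant, then there is `s₀ ≥ 1` such that for every `s ≥ s₀`
the form `φ` does not vanish on the subspace `V^{I_s, Λ(diag(1,·))}`. -/
theorem stmt15 {V : Type*} [AddCommGroup V] [Module ℂ V]
    (ρ : GL (Fin 2) ℚ_[p] →* (V →ₗ[ℂ] V))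
    (hsmooth : ∀ v : V, ∃ s : ℕ, 1 ≤ s ∧
      ∀ k : GL (Fin 2) ℚ_[p], inKs p s k → ρ k v = v)
    (Λ : GL (Fin 2) ℚ_[p] → ℂˣ)
    (hΛmul : ∀ t t' : GL (Fin 2) ℚ_[p], inT p t → inT p t' →
      Λ (t * t') = Λ t * Λ t')
    (hΛunr : ∀ u : ℚ_[p]ˣ, ‖(u : ℚ_[p])‖ = 1 → Λ (diagGL p u 1) = 1)
    (φ : V →ₗ[ℂ] ℂ) (hφ : φ ≠ 0)
    (hequiv : ∀ (t : GL (Fin 2) ℚ_[p]) (v : V), inT p t →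
      φ (ρ t v) = (Λ t : ℂ) * φ v) :
    ∃ s₀ : ℕ, 1 ≤ s₀ ∧ ∀ s : ℕ, s₀ ≤ s → ∃ v : V,
      φ v ≠ 0 ∧ ∀ (k : GL (Fin 2) ℚ_[p]) (d : ℚ_[p]ˣ),
        inI p s k → mat p k 1 1 = d →
        ρ k v = (Λ (diagGL p 1 d) : ℂ) • v := by
  obtain ⟨v₀, hv₀⟩ := DFunLike.ne_iff.1 hφ
  obtain ⟨r, hr, hfix⟩ := hsmooth v₀
  exact ⟨2 * r, by lia, fun s => stmt15_general p (mod_cast (Fact.out : p.Prime).ne_zero)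
    (mod_cast (Fact.out : p.Prime).ne_one) ρ Λ hΛunr φ hequiv hv₀ hr hfix⟩
end
end
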